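/- arXiv:2103.00715 — 2 statements merged into one kernel-verified Lean document; each statement's English description precedes it below -/
import Mathlib

section
/- For every a ∈ ℝ, the left fast-forwarding map N_a^l : D_{a,∞}([0,∞),ℝ) → D([0,∞),ℝ) is measurable with respect to the Borel σ-algebras induced by the Skorokhod J1 topology (on the domain, the trace σ-algebra on D_{a,∞}([0,∞),ℝ)). -/
open MeasureTheory Set Filter Topology

noncomputable section

/-- `f` is càdlàg on `[0,∞)`: right-continuous at every `t ≥ 0` and with left limits
at every `t > 0`. -/
def IsCadlag (f : ℝ → ℝ) : Prop :=
  (∀ t : ℝ, 0 ≤ t → Tendsto f (𝓝[≥] t) (𝓝 (f t))) ∧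
  (∀ t : ℝ, 0 < t → ∃ L : ℝ, Tendsto f (𝓝[<] t) (𝓝 L))

/-- A Skorokhod time change on `[0,T]`: a strictly increasing continuous bijection of
`[0,T]` onto itself. -/
def IsTimeChange (T : ℝ) (γ : ℝ → ℝ) : Prop :=
  ContinuousOn γ (Icc 0 T) ∧ StrictMonoOn γ (Icc 0 T) ∧ γ 0 = 0 ∧ γ T = T

/-- The Skorokhod `J1` metric on `D([0,T],ℝ)`:
`d_{J1,T}(f,g) = inf_γ max( sup_{t∈[0,T]} |γ(t)−t| , sup_{t∈[0,T]} |f(γ(t))−g(t)| )`. -/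
noncomputable def dJ1T (T : ℝ) (f g : ℝ → ℝ) : ℝ :=
  sInf {r : ℝ | 0 ≤ r ∧ ∃ γ : ℝ → ℝ, IsTimeChange T γ ∧
    (∀ t ∈ Icc (0:ℝ) T, |γ t - t| ≤ r) ∧ (∀ t ∈ Icc (0:ℝ) T, |f (γ t) - g t| ≤ r)}

/-- The smoothed restriction `f|_m` of `f` to `[0,m]`. -/
noncomputable def restrictD (m : ℝ) (f : ℝ → ℝ) : ℝ → ℝ :=
  fun t => if t ≤ m - 1 then f t else (m - t) * f t

/-- The Skorokhod `J1` metric on `D([0,∞),ℝ)`: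
`d_{J1}(f,g) = Σ_{m=1}^∞ 2^{−m} (1 ∧ d_{J1,m}(f|_m, g|_m))`. -/
noncomputable def dJ1 (f g : ℝ → ℝ) : ℝ :=
  ∑' m : ℕ, (2:ℝ)⁻¹ ^ (m + 1) *
    min 1 (dJ1T ((m:ℝ) + 1) (restrictD ((m:ℝ) + 1) f) (restrictD ((m:ℝ) + 1) g))

/-- `A_f(t) = ∫₀^t 1{f(z) > a} dz`. -/
noncomputable def occUpper (a : ℝ) (f : ℝ → ℝ) (t : ℝ) : ℝ :=
  ∫ z in (0:ℝ)..t, ({z : ℝ | a < f z}.indicator (fun _ => (1:ℝ)) z)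

/-- `A_f^{−1}(t) = inf{s > 0 : A_f(s) > t}` (occupation time of `(a,∞)`). -/
noncomputable def occUpperInv (a : ℝ) (f : ℝ → ℝ) (t : ℝ) : ℝ :=
  sInf {s : ℝ | 0 < s ∧ t < occUpper a f s}

/-- The left fast-forwarding map at level `a`: `N_a^l(f) = f ∘ A_f^{−1}`. -/
noncomputable def ffLeft (a : ℝ) (f : ℝ → ℝ) : ℝ → ℝ := fun t => f (occUpperInv a f t)

/-- `A_f(t) = ∫₀^t 1{f(z) < b} dz`. -/
noncomputable def occLower (b : ℝ) (f : ℝ → ℝ) (t : ℝ) : ℝ :=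
  ∫ z in (0:ℝ)..t, ({z : ℝ | f z < b}.indicator (fun _ => (1:ℝ)) z)

/-- `A_f^{−1}(t) = inf{s > 0 : A_f(s) > t}` (occupation time of `(−∞,b)`). -/
noncomputable def occLowerInv (b : ℝ) (f : ℝ → ℝ) (t : ℝ) : ℝ :=
  sInf {s : ℝ | 0 < s ∧ t < occLower b f s}

/-- The right fast-forwarding map at level `b`: `N_b^r(f) = f ∘ A_f^{−1}`. -/
noncomputable def ffRight (b : ℝ) (f : ℝ → ℝ) : ℝ → ℝ := fun t => f (occLowerInv b f t)

/-- Membership in `D_{a,∞}([0,∞),ℝ)`: the Lebesgue time spent in `(a,∞)` is infinite. -/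
def InfAbove (a : ℝ) (f : ℝ → ℝ) : Prop := volume {t : ℝ | 0 ≤ t ∧ a < f t} = ⊤

/-- Membership in `D_{−∞,b}([0,∞),ℝ)`: the Lebesgue time spent in `(−∞,b)` is infinite. -/
def InfBelow (b : ℝ) (f : ℝ → ℝ) : Prop := volume {t : ℝ | 0 ≤ t ∧ f t < b} = ⊤

/-- Membership in `D_{a,b}([0,∞),ℝ)`: the Lebesgue time spent in `(a,b)` is infinite. -/
def InfBetween (a b : ℝ) (f : ℝ → ℝ) : Prop :=
  volume {t : ℝ | 0 ≤ t ∧ f t ∈ Ioo a b} = ⊤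

/-- Condition (Nl): whenever `f ≥ a+ε` on `[t1,t2) ∪ [t3,t4)` and `f ≤ a` on `[t2,t3)`,
the supremum of `f` over `[t2,t3)` is strictly below `a`. -/
def CondNl (a : ℝ) (f : ℝ → ℝ) : Prop :=
  ∀ ε : ℝ, 0 < ε → ∀ t1 t2 t3 t4 : ℝ, t1 < t2 → t2 < t3 → t3 < t4 →
    (∀ t ∈ Ico t1 t2, a + ε ≤ f t) → (∀ t ∈ Ico t3 t4, a + ε ≤ f t) →
    (∀ t ∈ Ico t2 t3, f t ≤ a) →
    ∃ c : ℝ, c < a ∧ ∀ t ∈ Ico t2 t3, f t ≤ c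

/-- Condition (Nr): whenever `f ≤ b−ε` on `[t1,t2) ∪ [t3,t4)` and `f ≥ b` on `[t2,t3)`,
the infimum of `f` over `[t2,t3)` is strictly above `b`. -/
def CondNr (b : ℝ) (f : ℝ → ℝ) : Prop :=
  ∀ ε : ℝ, 0 < ε → ∀ t1 t2 t3 t4 : ℝ, t1 < t2 → t2 < t3 → t3 < t4 →
    (∀ t ∈ Ico t1 t2, f t ≤ b - ε) → (∀ t ∈ Ico t3 t4, f t ≤ b - ε) →
    (∀ t ∈ Ico t2 t3, b ≤ f t) →
    ∃ c : ℝ, b < c ∧ ∀ t ∈ Ico t2 t3, c ≤ f t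

/-- The space `D([0,∞),ℝ)` of càdlàg paths. -/
def Dfun : Type := {f : ℝ → ℝ // IsCadlag f}

/-- The Skorokhod `J1` topology on `D([0,∞),ℝ)`, generated by the open balls of the
Skorokhod metric `dJ1`. -/
noncomputable def J1Top : TopologicalSpace Dfun :=
  TopologicalSpace.generateFrom
    {s : Set Dfun | ∃ f : Dfun, ∃ ε : ℝ, 0 < ε ∧ s = {g : Dfun | dJ1 f.1 g.1 < ε}}

/-- The Borel σ-algebra of the Skorokhod `J1` topology on `D([0,∞),ℝ)`. -/
noncomputable def J1Borel : MeasurableSpace Dfun := @borel Dfun J1Top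

/-! ### Time changes as order isomorphisms of the line -/

lemma timeChange_orderIso {T : ℝ} (hT : 0 ≤ T) {γ : ℝ → ℝ} (hγ : IsTimeChange T γ) :
    ∃ e : ℝ ≃o ℝ, e 0 = 0 ∧ e T = T ∧ ∀ t ∈ Icc 0 T, e t = γ t := by
  obtain ⟨hc, hm, h0, h1⟩ := hγ
  set c : ℝ → ℝ := fun t => max 0 (min t T) with hcdef
  have hcmem : ∀ t, c t ∈ Icc 0 T := fun t =>
    ⟨le_max_left _ _, max_le hT (min_le_right _ _)⟩
  have hccont : Continuous c := by fun_prop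
  have hcid : ∀ t ∈ Icc 0 T, c t = t := by
    intro t ht
    simp [hcdef, ht.1, ht.2]
  set E : ℝ → ℝ := fun t => γ (c t) + (t - c t) with hE
  have hEc : Continuous E := by
    have : Continuous (fun t => γ (c t)) := hc.comp_continuous hccont hcmem
    exact this.add (continuous_id.sub hccont)
  have hcmono : ∀ x y, x < y → c x ≤ c y ∧ c y - c x ≤ y - x := by
    intro x y hxy
    simp only [hcdef]
    constructor
    · gcongr
    · rcases le_total x T with h | h <;> rcases le_total y T with h' | h' <;>
        rcases le_total 0 x with h'' | h'' <;> rcases le_total 0 y with h3 | h3 <;>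
        simp [*] <;> linarith
  have hEm : StrictMono E := by
    intro x y hxy
    obtain ⟨h2, h3⟩ := hcmono x y hxy
    rcases h2.lt_or_eq with h | h
    · have := hm (hcmem x) (hcmem y) h
      simp only [hE]; linarith
    · simp only [hE, h]; linarith
  have hEs : Function.Surjective E := by
    refine hEc.surjective ?_ ?_
    · refine tendsto_id.congr' ?_
      filter_upwards [eventually_ge_atTop T] with t ht
      have : c t = T := by simp [hcdef, ht, hT]
      simp [hE, this, h1]
    · refine tendsto_id.congr' ?_
      filter_upwards [eventually_le_atBot 0] with t ht
      have : c t = 0 := by simp [hcdef, ht]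
      simp [hE, this, h0]
  have key : ∀ t ∈ Icc 0 T, E t = γ t := by
    intro t ht
    simp [hE, hcid t ht]
  refine ⟨hEm.orderIsoOfSurjective E hEs, ?_, ?_, ?_⟩
  · simpa [h0] using key 0 ⟨le_rfl, hT⟩
  · simpa [h1] using key T ⟨hT, le_rfl⟩
  · intro t ht
    simpa using key t ht

lemma orderIso_timeChange {T : ℝ} (e : ℝ ≃o ℝ) (h0 : e 0 = 0) (hT : e T = T) :
    IsTimeChange T e :=
  ⟨e.continuous.continuousOn, e.strictMono.strictMonoOn _, h0, hT⟩

lemma orderIso_mem {T : ℝ} {e : ℝ ≃o ℝ} (h0 : e 0 = 0) (hT : e T = T) {t : ℝ}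
    (ht : t ∈ Icc 0 T) : e t ∈ Icc 0 T := by
  constructor
  · rw [← h0]; exact e.monotone ht.1
  · rw [← hT]; exact e.monotone ht.2

lemma dJ1T_nonneg (T : ℝ) (f g : ℝ → ℝ) : 0 ≤ dJ1T T f g :=
  Real.sInf_nonneg fun _ hr => hr.1

lemma dJ1T_le {T r : ℝ} {f g : ℝ → ℝ} (hr : 0 ≤ r) (e : ℝ ≃o ℝ) (h0 : e 0 = 0) (hT : e T = T)
    (h1 : ∀ t ∈ Icc (0:ℝ) T, |e t - t| ≤ r) (h2 : ∀ t ∈ Icc (0:ℝ) T, |f (e t) - g t| ≤ r) :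
    dJ1T T f g ≤ r :=
  csInf_le ⟨0, fun _ hr => hr.1⟩ ⟨hr, e, orderIso_timeChange e h0 hT, h1, h2⟩

/-- boundedness on a compact time interval -/
def BddT (T : ℝ) (f : ℝ → ℝ) : Prop := ∃ C : ℝ, ∀ t ∈ Icc 0 T, |f t| ≤ C

lemma exists_of_dJ1T_lt {T r : ℝ} {f g : ℝ → ℝ} (hT : 0 ≤ T) (hf : BddT T f) (hg : BddT T g)
    (h : dJ1T T f g < r) : ∃ e : ℝ ≃o ℝ, e 0 = 0 ∧ e T = T ∧
      (∀ t ∈ Icc (0:ℝ) T, |e t - t| < r) ∧ (∀ t ∈ Icc (0:ℝ) T, |f (e t) - g t| < r) := by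
  obtain ⟨C, hC⟩ := hf
  obtain ⟨C', hC'⟩ := hg
  have hne : {r : ℝ | 0 ≤ r ∧ ∃ γ : ℝ → ℝ, IsTimeChange T γ ∧
    (∀ t ∈ Icc (0:ℝ) T, |γ t - t| ≤ r) ∧ (∀ t ∈ Icc (0:ℝ) T, |f (γ t) - g t| ≤ r)}.Nonempty := by
    have h0 : (0:ℝ) ∈ Icc 0 T := ⟨le_rfl, hT⟩
    have a1 := (abs_nonneg _).trans (hC 0 h0)
    have a2 := (abs_nonneg _).trans (hC' 0 h0)
    refine ⟨C + C', by linarith, OrderIso.refl ℝ, orderIso_timeChange _ rfl rfl, ?_, ?_⟩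
    · intro t ht; simp; linarith
    · intro t ht
      have := abs_sub (f t) (g t)
      have := hC t ht
      have := hC' t ht
      simp; linarith
  obtain ⟨r', ⟨-, γ, hγ, h1, h2⟩, hr'⟩ := exists_lt_of_csInf_lt hne h
  obtain ⟨e, e0, eT, he⟩ := timeChange_orderIso hT hγ
  refine ⟨e, e0, eT, fun t ht => ?_, fun t ht => ?_⟩
  · rw [he t ht]; exact (h1 t ht).trans_lt hr'
  · rw [he t ht]; exact (h2 t ht).trans_lt hr'

lemma dJ1T_self (T : ℝ) (f : ℝ → ℝ) : dJ1T T f f = 0 :=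
  le_antisymm (dJ1T_le le_rfl (OrderIso.refl ℝ) rfl rfl (by simp) (by simp)) (dJ1T_nonneg _ _ _)

lemma dJ1T_comm_le {T : ℝ} {f g : ℝ → ℝ} (hT : 0 ≤ T) (hf : BddT T f) (hg : BddT T g) :
    dJ1T T g f ≤ dJ1T T f g := by
  refine le_of_forall_gt_imp_ge_of_dense fun r hr => ?_
  obtain ⟨e, h0, h1, h2, h3⟩ := exists_of_dJ1T_lt hT hf hg hr
  have e0 : e.symm 0 = 0 := by rw [OrderIso.symm_apply_eq, h0]
  have eT : e.symm T = T := by rw [OrderIso.symm_apply_eq, h1]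
  refine dJ1T_le ((dJ1T_nonneg _ _ _).trans hr.le) e.symm e0 eT ?_ ?_
  · intro t ht
    have := h2 _ (orderIso_mem e0 eT ht)
    rw [e.apply_symm_apply, abs_sub_comm] at this
    exact this.le
  · intro t ht
    have := h3 _ (orderIso_mem e0 eT ht)
    rw [e.apply_symm_apply, abs_sub_comm] at this
    exact this.le

lemma dJ1T_triangle {T : ℝ} {f g h : ℝ → ℝ} (hT : 0 ≤ T) (hf : BddT T f) (hg : BddT T g)
    (hh : BddT T h) : dJ1T T f h ≤ dJ1T T f g + dJ1T T g h := by
  refine le_of_forall_pos_le_add fun ε hε => ?_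
  obtain ⟨e, h0, h1, h2, h3⟩ := exists_of_dJ1T_lt (r := dJ1T T f g + ε / 2) hT hf hg (by linarith)
  obtain ⟨e', h0', h1', h2', h3'⟩ :=
    exists_of_dJ1T_lt (r := dJ1T T g h + ε / 2) hT hg hh (by linarith)
  have := dJ1T_nonneg T f g
  have := dJ1T_nonneg T g h
  refine dJ1T_le (by linarith) (e'.trans e) (by simp [h0, h0']) (by simp [h1, h1']) ?_ ?_
  · intro t ht
    have k1 := h2 _ (orderIso_mem h0' h1' ht)
    have k2 := h2' t ht
    have := abs_sub_le (e (e' t)) (e' t) t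
    simp only [OrderIso.trans_apply]
    linarith
  · intro t ht
    have k1 := h3 _ (orderIso_mem h0' h1' ht)
    have k2 := h3' t ht
    have := abs_sub_le (f (e (e' t))) (g (e' t)) (h t)
    simp only [OrderIso.trans_apply]
    linarith

lemma IsCadlag.bddT {f : ℝ → ℝ} (hf : IsCadlag f) (T : ℝ) : BddT T f := by
  suffices ∃ C : ℝ, ∀ t ∈ Icc 0 T, 0 ≤ t → |f t| ≤ C by
    obtain ⟨C, hC⟩ := this
    exact ⟨C, fun t ht => hC t ht ht.1⟩
  refine IsCompact.induction_on (p := fun s => ∃ C : ℝ, ∀ t ∈ s, 0 ≤ t → |f t| ≤ C)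
    (isCompact_Icc (a := (0:ℝ)) (b := T)) ⟨0, by simp⟩ ?_ ?_ ?_
  · rintro s t hst ⟨C, hC⟩
    exact ⟨C, fun x hx => hC x (hst hx)⟩
  · rintro s t ⟨C, hC⟩ ⟨C', hC'⟩
    refine ⟨max C C', ?_⟩
    rintro x (hx | hx) h0
    · exact (hC x hx h0).trans (le_max_left _ _)
    · exact (hC' x hx h0).trans (le_max_right _ _)
  · intro x hx
    have hr : ∀ᶠ y in 𝓝[≥] x, |f y| ≤ |f x| + 1 :=
      ((hf.1 x hx.1).abs.eventually_lt_const (lt_add_one _)).mono fun _ h => h.le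
    have hl : ∃ C, ∀ᶠ y in 𝓝[<] x, 0 ≤ y → |f y| ≤ C := by
      rcases hx.1.lt_or_eq with h | h
      · obtain ⟨L, hL⟩ := hf.2 x h
        exact ⟨|L| + 1, (hL.abs.eventually_lt_const (lt_add_one _)).mono fun _ h _ => h.le⟩
      · refine ⟨0, ?_⟩
        filter_upwards [self_mem_nhdsWithin] with y hy h0
        simp only [mem_Iio] at hy
        linarith
    obtain ⟨C, hl⟩ := hl
    have : ∀ᶠ y in 𝓝 x, 0 ≤ y → |f y| ≤ max C (|f x| + 1) := by
      rw [← nhdsLT_sup_nhdsGE, eventually_sup]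
      exact ⟨hl.mono fun y h h0 => (h h0).trans (le_max_left _ _),
        hr.mono fun y h _ => h.trans (le_max_right _ _)⟩
    exact ⟨_, mem_nhdsWithin_of_mem_nhds this, _, fun t ht => ht⟩

/-- the weight appearing in `restrictD` -/
def wgt (m t : ℝ) : ℝ := min 1 (m - t)

lemma restrictD_eq (m : ℝ) (f : ℝ → ℝ) (t : ℝ) : restrictD m f t = wgt m t * f t := by
  unfold restrictD wgt
  split_ifs with h
  · rw [min_eq_left (by linarith), one_mul]
  · rw [min_eq_right (by linarith)]

lemma abs_wgt_le {m t : ℝ} (ht : t ≤ m) : |wgt m t| ≤ 1 := by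
  unfold wgt
  rw [abs_of_nonneg (le_min zero_le_one (by linarith))]
  exact min_le_left _ _

lemma abs_wgt_sub_le (m s t : ℝ) : |wgt m s - wgt m t| ≤ |s - t| := by
  unfold wgt
  have := abs_min_sub_min_le_max 1 (m - s) 1 (m - t)
  refine this.trans ?_
  simp [abs_sub_comm]

lemma BddT.restrictD {T : ℝ} {f : ℝ → ℝ} (hf : BddT T f) : BddT T (restrictD T f) := by
  obtain ⟨C, hC⟩ := hf
  refine ⟨C, fun t ht => ?_⟩
  rw [restrictD_eq, abs_mul]
  have := abs_wgt_le ht.2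
  have := hC t ht
  nlinarith [abs_nonneg (f t)]

/-- a term of the series defining `dJ1` -/
def dterm (m : ℕ) (f g : ℝ → ℝ) : ℝ :=
  (2:ℝ)⁻¹ ^ (m + 1) *
    min 1 (dJ1T ((m:ℝ) + 1) (restrictD ((m:ℝ) + 1) f) (restrictD ((m:ℝ) + 1) g))

lemma dterm_nonneg (m : ℕ) (f g : ℝ → ℝ) : 0 ≤ dterm m f g :=
  mul_nonneg (by positivity) (le_min zero_le_one (dJ1T_nonneg _ _ _))

lemma dterm_le (m : ℕ) (f g : ℝ → ℝ) : dterm m f g ≤ (2:ℝ)⁻¹ ^ (m + 1) :=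
  mul_le_of_le_one_right (by positivity) (min_le_left _ _)

lemma summable_half : Summable fun m : ℕ => (2:ℝ)⁻¹ ^ (m + 1) :=
  (summable_nat_add_iff 1).2 (summable_geometric_of_lt_one (by norm_num) (by norm_num))

lemma summable_dterm (f g : ℝ → ℝ) : Summable fun m => dterm m f g :=
  Summable.of_nonneg_of_le (fun m => dterm_nonneg m f g) (fun m => dterm_le m f g) summable_half

lemma dterm_le_dJ1 (m : ℕ) (f g : ℝ → ℝ) : dterm m f g ≤ dJ1 f g :=
  (summable_dterm f g).le_tsum m fun k _ => dterm_nonneg k f g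

lemma dJ1_self (f : ℝ → ℝ) : dJ1 f f = 0 := by
  simp [dJ1, dJ1T_self]

lemma dJ1_comm {f g : ℝ → ℝ} (hf : IsCadlag f) (hg : IsCadlag g) : dJ1 f g = dJ1 g f := by
  unfold dJ1
  congr 1
  ext m
  have : (0:ℝ) ≤ m + 1 := by positivity
  rw [le_antisymm (dJ1T_comm_le this (hg.bddT _).restrictD (hf.bddT _).restrictD)
    (dJ1T_comm_le this (hf.bddT _).restrictD (hg.bddT _).restrictD)]

lemma dJ1_triangle {f g h : ℝ → ℝ} (hf : IsCadlag f) (hg : IsCadlag g) (hh : IsCadlag h) :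
    dJ1 f h ≤ dJ1 f g + dJ1 g h := by
  change ∑' m, dterm m f h ≤ ∑' m, dterm m f g + ∑' m, dterm m g h
  rw [← (summable_dterm f g).tsum_add (summable_dterm g h)]
  refine (summable_dterm f h).tsum_le_tsum (fun m => ?_)
    ((summable_dterm f g).add (summable_dterm g h))
  have h0 : (0:ℝ) ≤ m + 1 := by positivity
  have := dJ1T_triangle h0 (hf.bddT _).restrictD (hg.bddT _).restrictD (hh.bddT _).restrictD
  unfold dterm
  rw [← mul_add]
  refine mul_le_mul_of_nonneg_left ?_ (by positivity)
  set x := dJ1T ((m:ℝ) + 1) (restrictD ((m:ℝ) + 1) f) (restrictD ((m:ℝ) + 1) g)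
  set y := dJ1T ((m:ℝ) + 1) (restrictD ((m:ℝ) + 1) g) (restrictD ((m:ℝ) + 1) h)
  have hx : 0 ≤ x := dJ1T_nonneg _ _ _
  have hy : 0 ≤ y := dJ1T_nonneg _ _ _
  rcases le_total 1 x with h1 | h1 <;> rcases le_total 1 y with h2 | h2 <;>
    simp only [min_eq_left h1, min_eq_right h1, min_eq_left h2, min_eq_right h2] <;>
    first
    | exact (min_le_right _ _).trans this
    | exact (min_le_left _ _).trans (by linarith)

/-- The pseudometric structure. -/
@[reducible] def J1Metric : PseudoMetricSpace Dfun where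
  dist f g := dJ1 f.1 g.1
  dist_self f := dJ1_self f.1
  dist_comm f g := dJ1_comm f.2 g.2
  dist_triangle f g h := dJ1_triangle f.2 g.2 h.2

lemma J1Top_eq : J1Top = J1Metric.toUniformSpace.toTopologicalSpace := by
  let := J1Metric
  apply le_antisymm
  · intro s hs
    have hs' : IsOpen s := hs
    rw [Metric.isOpen_iff] at hs'
    choose ε hε h using hs'
    have : s = ⋃ (x : Dfun) (hx : x ∈ s), {g : Dfun | dJ1 x.1 g.1 < ε x hx} := by
      ext y
      simp only [mem_iUnion]
      constructor
      · intro hy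
        exact ⟨y, hy, by simpa [dJ1_self] using hε y hy⟩
      · rintro ⟨x, hx, hxy⟩
        apply h x hx
        rw [Metric.mem_ball']
        exact hxy
    rw [this]
    refine @isOpen_iUnion _ _ J1Top _ fun x => @isOpen_iUnion _ _ J1Top _ fun hx => ?_
    exact TopologicalSpace.isOpen_generateFrom_of_mem ⟨x, _, hε x hx, rfl⟩
  · refine le_generateFrom ?_
    rintro s ⟨f, ε, hε, rfl⟩
    have : {g : Dfun | dJ1 f.1 g.1 < ε} = Metric.ball f ε := by
      ext g
      rw [Metric.mem_ball']
      rfl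
    rw [this]
    exact Metric.isOpen_ball

/-! ### Evaluation maps are Borel -/

lemma isOpen_J1_exists {p q c : ℝ} (hp : 0 ≤ p) :
    @IsOpen _ J1Top {f : Dfun | ∃ s ∈ Ioo p q, c < f.1 s} := by
  rw [J1Top_eq]
  let := J1Metric
  rw [Metric.isOpen_iff]
  rintro f ⟨s, hs, hc⟩
  obtain ⟨m, hm⟩ := exists_nat_ge (s + 1)
  set r := min 1 (min (s - p) (min (q - s) (f.1 s - c))) with hr
  have hr0 : 0 < r := by
    simp only [hr, lt_min_iff]
    exact ⟨one_pos, by linarith [hs.1], by linarith [hs.2], by linarith⟩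
  have r1 : r ≤ 1 := min_le_left _ _
  have r2 : r ≤ s - p := (min_le_right _ _).trans (min_le_left _ _)
  have r3 : r ≤ q - s := (min_le_right _ _).trans ((min_le_right _ _).trans (min_le_left _ _))
  have r4 : r ≤ f.1 s - c := (min_le_right _ _).trans ((min_le_right _ _).trans (min_le_right _ _))
  refine ⟨(2:ℝ)⁻¹ ^ (m + 1) * r, by positivity, ?_⟩
  intro g hg
  rw [Metric.mem_ball'] at hg
  have h1 := (dterm_le_dJ1 m f.1 g.1).trans_lt hg
  have h2 := lt_of_mul_lt_mul_left h1 (by positivity)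
  rw [min_lt_iff] at h2
  have h3 := h2.resolve_left (by linarith)
  have hm0 : (0:ℝ) ≤ m + 1 := by positivity
  obtain ⟨e, h0, hT, k1, k2⟩ :=
    exists_of_dJ1T_lt hm0 (f.2.bddT _).restrictD (g.2.bddT _).restrictD h3
  have e0 : e.symm 0 = 0 := by rw [OrderIso.symm_apply_eq, h0]
  have eT : e.symm (m + 1 : ℝ) = m + 1 := by rw [OrderIso.symm_apply_eq, hT]
  have hmem : s ∈ Icc (0:ℝ) (m + 1) := ⟨by linarith [hs.1], by linarith⟩
  have hu := orderIso_mem e0 eT hmem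
  have k1 := k1 _ hu
  have k2 := k2 _ hu
  rw [e.apply_symm_apply] at k1 k2
  rw [abs_lt] at k1
  have l1 : restrictD (m + 1 : ℝ) f.1 s = f.1 s := by
    unfold _root_.restrictD; rw [if_pos (by linarith)]
  have l2 : restrictD (m + 1 : ℝ) g.1 (e.symm s) = g.1 (e.symm s) := by
    unfold _root_.restrictD; rw [if_pos (by linarith)]
  rw [l1, l2, abs_lt] at k2
  exact ⟨e.symm s, ⟨by linarith, by linarith⟩, by linarith⟩

lemma measurable_eval {t : ℝ} (ht : 0 ≤ t) : Measurable[J1Borel] fun f : Dfun => f.1 t := by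
  let : MeasurableSpace Dfun := J1Borel
  refine measurable_of_Iio fun c => ?_
  have : (fun f : Dfun => f.1 t) ⁻¹' Iio c = ⋃ (n : ℕ) (k : ℕ),
      {f : Dfun | ∃ s ∈ Ioo t (t + 1 / ((n:ℝ) + 1)), c - 1 / ((k:ℝ) + 1) < f.1 s}ᶜ := by
    ext f
    simp only [mem_preimage, mem_Iio, mem_iUnion, mem_compl_iff, mem_ofPred_eq, not_exists, not_and,
      not_lt]
    constructor
    · intro h
      obtain ⟨k, hk⟩ := exists_nat_one_div_lt (sub_pos.2 h)
      have h1 : ∀ᶠ s in 𝓝[≥] t, f.1 s < c - 1 / ((k:ℝ) + 1) :=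
        (f.2.1 t ht).eventually_lt_const (by linarith)
      obtain ⟨u, hu, hu'⟩ := mem_nhdsGE_iff_exists_Ico_subset.1 h1
      obtain ⟨n, hn⟩ := exists_nat_one_div_lt (sub_pos.2 (mem_Ioi.1 hu))
      refine ⟨n, k, fun s hs => ?_⟩
      have : s ∈ Ico t u := ⟨hs.1.le, by linarith [hs.2]⟩
      exact le_of_lt (hu' this)
    · rintro ⟨n, k, h⟩
      have h1 : ∀ᶠ s in 𝓝[>] t, f.1 s ≤ c - 1 / ((k:ℝ) + 1) := by
        have : Ioo t (t + 1 / ((n:ℝ) + 1)) ∈ 𝓝[>] t :=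
          Ioo_mem_nhdsGT (by have : 0 < 1 / ((n:ℝ) + 1) := by positivity
                             linarith)
        filter_upwards [this] with s hs using h s hs
      have h2 := le_of_tendsto ((f.2.1 t ht).mono_left (nhdsWithin_mono _ Ioi_subset_Ici_self)) h1
      have : 0 < 1 / ((k:ℝ) + 1) := by positivity
      linarith
  rw [this]
  refine MeasurableSet.iUnion fun n => MeasurableSet.iUnion fun k => MeasurableSet.compl ?_
  exact MeasurableSpace.measurableSet_generateFrom (isOpen_J1_exists ht)

/-! ### Approximation by sampled step functions -/

/-- Up to time `T`, sampling `g` at mesh `1/N` is `δ`-close to `g` after a small time change. -/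
def GridP (g : ℝ → ℝ) (δ T : ℝ) : Prop :=
  ∃ N0 : ℝ, 0 < N0 ∧ ∀ N ≥ N0, ∃ e : ℝ ≃o ℝ, e 0 = 0 ∧ e (⌈N * T⌉ / N) = T ∧
    ∀ t ∈ Icc (0:ℝ) (⌈N * T⌉ / N), |e t - t| ≤ 1 / N ∧
      (t < ⌈N * T⌉ / N → |g (e t) - g (⌊N * t⌋ / N)| ≤ δ)

lemma gridP_zero (g : ℝ → ℝ) (δ : ℝ) : GridP g δ 0 := by
  refine ⟨1, one_pos, fun N hN => ⟨OrderIso.refl ℝ, rfl, by simp, ?_⟩⟩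
  intro t ht
  simp only [mul_zero, Int.ceil_zero, Int.cast_zero, zero_div] at ht ⊢
  have : t = 0 := le_antisymm ht.2 ht.1
  subst this
  simp
  linarith

lemma glue_orderIso (e : ℝ ≃o ℝ) {s T c : ℝ} (he : e s = T) (hc : 0 < c) :
    ∃ e' : ℝ ≃o ℝ, (∀ t < s, e' t = e t) ∧ (∀ t ≥ s, e' t = T + (t - s) * c) := by
  set E : ℝ → ℝ := fun t => if t < s then e t else T + (t - s) * c with hE
  have h1 : ∀ t < s, E t = e t := fun t ht => by simp [hE, ht]
  have h2 : ∀ t ≥ s, E t = T + (t - s) * c := fun t ht => by simp [hE, not_lt.2 ht]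
  have hm : StrictMono E := by
    intro x y hxy
    rcases lt_or_ge y s with hy | hy
    · rw [h1 x (hxy.trans hy), h1 y hy]
      exact e.strictMono hxy
    · rw [h2 y hy]
      rcases lt_or_ge x s with hx | hx
      · rw [h1 x hx]
        have := e.strictMono hx
        rw [he] at this
        nlinarith
      · rw [h2 x hx]
        nlinarith
  have hs : Function.Surjective E := by
    intro y
    rcases lt_or_ge y T with hy | hy
    · refine ⟨e.symm y, ?_⟩
      rw [h1, e.apply_symm_apply]
      rw [OrderIso.symm_apply_lt, he]
      exact hy
    · refine ⟨s + (y - T) / c, ?_⟩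
      have : 0 ≤ (y - T) / c := div_nonneg (by linarith) hc.le
      rw [h2 _ (by linarith)]
      field_simp
      ring
  exact ⟨hm.orderIsoOfSurjective E hs, by simpa using h1, by simpa using h2⟩

lemma gridP_step {g : ℝ → ℝ} {δ T T' : ℝ} (hT : 0 ≤ T) (hTT : T < T')
    (hosc : ∀ x ∈ Ico T T', ∀ y ∈ Ico T T', |g x - g y| ≤ δ) (h : GridP g δ T) :
    GridP g δ T' := by
  obtain ⟨N0, hN0, h⟩ := h
  refine ⟨max N0 (1 / (T' - T)), lt_max_of_lt_left hN0, fun N hN => ?_⟩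
  have hN1 : N0 ≤ N := (le_max_left _ _).trans hN
  have hN2 : 1 / (T' - T) ≤ N := (le_max_right _ _).trans hN
  have hNpos : 0 < N := hN0.trans_le hN1
  have hd : 0 < T' - T := by linarith
  rw [div_le_iff₀ hd] at hN2
  obtain ⟨e, e0, eT, he⟩ := h N hN1
  have hceil : (⌈N * T⌉ : ℝ) + 1 ≤ ⌈N * T'⌉ := by
    have : ⌈N * T⌉ + 1 ≤ ⌈N * T'⌉ := by
      rw [← Int.ceil_add_one]
      apply Int.ceil_mono
      linarith
    exact_mod_cast this
  set s := (⌈N * T⌉ : ℝ) / N with hs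
  set s' := (⌈N * T'⌉ : ℝ) / N with hs'
  have hss : s < s' := by
    rw [hs, hs']
    exact div_lt_div_of_pos_right (by linarith) hNpos
  have hsT : T ≤ s := by
    rw [hs, le_div_iff₀ hNpos, mul_comm]; exact Int.le_ceil _
  have hsT' : s - T ≤ 1 / N := by
    rw [hs, div_sub' hNpos.ne']
    gcongr
    linarith [Int.ceil_lt_add_one (N * T)]
  have hsT2 : T' ≤ s' := by
    rw [hs', le_div_iff₀ hNpos, mul_comm]; exact Int.le_ceil _
  have hsT2' : s' - T' ≤ 1 / N := by
    rw [hs', div_sub' hNpos.ne']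
    gcongr
    linarith [Int.ceil_lt_add_one (N * T')]
  have hs0 : 0 ≤ s := hT.trans hsT
  have hsd : 0 < s' - s := by linarith
  obtain ⟨e', h1, h2⟩ := glue_orderIso e eT (div_pos hd hsd)
  have hNinv : 0 < 1 / N := by positivity
  refine ⟨e', ?_, ?_, ?_⟩
  · rcases hs0.lt_or_eq with h | h
    · rw [h1 0 h, e0]
    · rw [h2 0 h.symm.le, ← h, sub_zero, zero_mul, add_zero, ← eT, ← h, e0]
  · rw [h2 s' hss.le]
    field_simp
    ring
  · intro t ht
    rcases lt_or_ge t s with hts | hts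
    · rw [h1 t hts]
      exact ⟨(he t ⟨ht.1, hts.le⟩).1, fun _ => (he t ⟨ht.1, hts.le⟩).2 hts⟩
    · rw [h2 t hts]
      obtain ⟨θ, hθ⟩ : ∃ θ, θ = (t - s) / (s' - s) := ⟨_, rfl⟩
      have hθ0 : 0 ≤ θ := by rw [hθ]; exact div_nonneg (by linarith) hsd.le
      have hθ1 : θ ≤ 1 := by rw [hθ, div_le_one hsd]; linarith [ht.2]
      have htθ : t = s + θ * (s' - s) := by rw [hθ]; field_simp; ring
      have hval : T + (t - s) * ((T' - T) / (s' - s)) = T + θ * (T' - T) := by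
        rw [hθ]; field_simp
      rw [hval]
      constructor
      · rw [abs_le, htθ]
        constructor <;> nlinarith
      · intro hts'
        have hθ1' : θ < 1 := by rw [hθ, div_lt_one hsd]; linarith
        apply hosc
        · constructor <;> nlinarith
        · constructor
          · refine hsT.trans ?_
            rw [hs]
            gcongr
            rw [Int.le_floor]
            rw [hs, div_le_iff₀ hNpos] at hts
            linarith
          · rw [div_lt_iff₀ hNpos]
            rw [hs', lt_div_iff₀ hNpos] at hts'
            have : ⌊N * t⌋ < ⌈N * T'⌉ := by
              rw [Int.floor_lt]; linarith
            rw [Int.lt_ceil] at this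
            linarith

lemma gridP_all {g : ℝ → ℝ} (hg : IsCadlag g) {δ : ℝ} (hδ : 0 < δ) {T : ℝ} (hT : 0 ≤ T) :
    GridP g δ T := by
  set S := {t | t ∈ Icc 0 T ∧ GridP g δ t} with hS
  have h0S : (0:ℝ) ∈ S := ⟨⟨le_rfl, hT⟩, gridP_zero g δ⟩
  have hbdd : BddAbove S := ⟨T, fun t ht => ht.1.2⟩
  set c := sSup S with hc
  have hc0 : 0 ≤ c := le_csSup hbdd h0S
  have hcT : c ≤ T := csSup_le ⟨0, h0S⟩ fun t ht => ht.1.2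
  have hosc : ∀ (l : Filter ℝ) (L : ℝ), Tendsto g l (𝓝 L) →
      ∃ A ∈ l, ∀ x ∈ A, ∀ y ∈ A, |g x - g y| ≤ δ := by
    intro l L hL
    have := hL.eventually (Metric.ball_mem_nhds L (half_pos hδ))
    refine ⟨_, this, fun x hx y hy => ?_⟩
    have hx' : dist (g x) L < δ / 2 := hx
    have hy' : dist (g y) L < δ / 2 := hy
    have := dist_triangle_right (g x) (g y) L
    rw [← Real.dist_eq]
    linarith
  have hPc : GridP g δ c := by
    rcases hc0.lt_or_eq with h | h
    · obtain ⟨L, hL⟩ := hg.2 c h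
      obtain ⟨A, hA, hA'⟩ := hosc _ _ hL
      obtain ⟨l, hl, hlA⟩ := (mem_nhdsLT_iff_exists_Ico_subset).1 hA
      obtain ⟨p, hp, hlp⟩ := exists_lt_of_lt_csSup ⟨0, h0S⟩ (mem_Iio.1 hl)
      rcases (le_csSup hbdd hp).lt_or_eq with hpc | hpc
      · refine gridP_step hp.1.1 hpc (fun x hx y hy => hA' x (hlA ?_) y (hlA ?_)) hp.2
        · exact ⟨hlp.le.trans hx.1, hx.2⟩
        · exact ⟨hlp.le.trans hy.1, hy.2⟩
      · rw [hc, ← hpc]; exact hp.2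
    · rw [← h]; exact gridP_zero g δ
  rcases hcT.lt_or_eq with h | h
  · exfalso
    obtain ⟨A, hA, hA'⟩ := hosc _ _ (hg.1 c hc0)
    obtain ⟨u, hu, huA⟩ := mem_nhdsGE_iff_exists_Ico_subset.1 hA
    rw [mem_Ioi] at hu
    have hcu : c < min u T := lt_min hu h
    have : min u T ∈ S := by
      refine ⟨⟨hc0.trans hcu.le, min_le_right _ _⟩, ?_⟩
      refine gridP_step hc0 hcu (fun x hx y hy => hA' x (huA ?_) y (huA ?_)) hPc
      · exact ⟨hx.1, hx.2.trans_le (min_le_left _ _)⟩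
      · exact ⟨hy.1, hy.2.trans_le (min_le_left _ _)⟩
    exact absurd (le_csSup hbdd this) (not_le.2 hcu)
  · rw [← h]; exact hPc

lemma isCadlag_floor {c : ℝ} (hc : 0 < c) (φ : ℤ → ℝ) : IsCadlag fun t => φ ⌊c * t⌋ := by
  have hcont : ∀ t, Tendsto (fun t => c * t) (𝓝 t) (𝓝 (c * t)) := fun t =>
    (continuous_const.mul continuous_id).tendsto t
  constructor
  · intro t _
    have h1 : Tendsto (fun t => c * t) (𝓝[≥] t) (𝓝[≥] (c * t)) :=
      tendsto_nhdsWithin_of_tendsto_nhds_of_eventually_within _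
        ((hcont t).mono_left nhdsWithin_le_nhds)
        (by filter_upwards [self_mem_nhdsWithin] with s hs
            simp only [mem_Ici] at hs ⊢
            gcongr)
    exact (tendsto_pure_nhds φ _).comp ((tendsto_floor_right_pure_floor (c * t)).comp h1)
  · intro t _
    have h1 : Tendsto (fun t => c * t) (𝓝[<] t) (𝓝[<] (c * t)) :=
      tendsto_nhdsWithin_of_tendsto_nhds_of_eventually_within _
        ((hcont t).mono_left nhdsWithin_le_nhds)
        (by filter_upwards [self_mem_nhdsWithin] with s hs
            simp only [mem_Iio] at hs ⊢
            gcongr)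
    exact ⟨_, (tendsto_pure_nhds φ _).comp
      ((tendsto_floor_left_pure_ceil_sub_one (c * t)).comp h1)⟩

/-- The finitely many rounded sampled values of a path. -/
def code (n : ℕ) (f : ℝ → ℝ) : Fin ((n + 1) ^ 2 + 1) → ℤ :=
  fun j => ⌊((n:ℝ) + 1) * f (((j : ℕ) : ℝ) / ((n:ℝ) + 1))⌋

/-- The step path attached to rounded sampled values. -/
def stepPath (n : ℕ) (x : Fin ((n + 1) ^ 2 + 1) → ℤ) : Dfun :=
  ⟨fun t => (fun k : ℤ => (x ⟨min k.toNat ((n + 1) ^ 2), by omega⟩ : ℝ) / ((n:ℝ) + 1))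
      ⌊((n:ℝ) + 1) * t⌋,
    isCadlag_floor (Nat.cast_add_one_pos n)
      (fun k : ℤ => (x ⟨min k.toNat ((n + 1) ^ 2), by omega⟩ : ℝ) / ((n:ℝ) + 1))⟩

lemma stepPath_code {n m : ℕ} (hnm : m ≤ n) {f : ℝ → ℝ} {t : ℝ}
    (ht : t ∈ Icc (0:ℝ) ((m:ℝ) + 1)) :
    |(stepPath n (code n f)).1 t - f (⌊((n:ℝ) + 1) * t⌋ / ((n:ℝ) + 1))| ≤ 1 / ((n:ℝ) + 1) := by
  have hn : (0:ℝ) < (n:ℝ) + 1 := by positivity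
  have hk0 : 0 ≤ ⌊((n:ℝ) + 1) * t⌋ := Int.floor_nonneg.2 (mul_nonneg hn.le ht.1)
  obtain ⟨k, hk⟩ := Int.eq_ofNat_of_zero_le hk0
  have hk2 : k ≤ (n + 1) ^ 2 := by
    have h1 : ((k : ℤ) : ℝ) ≤ ((n:ℝ) + 1) * t := by rw [← hk]; exact Int.floor_le _
    have h2 : (m:ℝ) ≤ n := by exact_mod_cast hnm
    have h3 : (k : ℝ) ≤ ((n:ℝ) + 1) ^ 2 := by
      push_cast at h1
      nlinarith [ht.2]
    exact_mod_cast h3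
  have hv : (stepPath n (code n f)).1 t =
      (⌊((n:ℝ) + 1) * f ((k : ℝ) / ((n:ℝ) + 1))⌋ : ℝ) / ((n:ℝ) + 1) := by
    simp only [stepPath, code, hk, Int.toNat_natCast, min_eq_left hk2]
  rw [hv, hk]
  push_cast
  set y := f ((k : ℝ) / ((n:ℝ) + 1))
  have h1 := Int.floor_le (((n:ℝ) + 1) * y)
  have h2 := Int.lt_floor_add_one (((n:ℝ) + 1) * y)
  rw [div_sub' hn.ne', abs_div, abs_of_pos hn]
  gcongr
  rw [abs_le]
  constructor <;> linarith

lemma tendsto_dJ1T_step {f : ℝ → ℝ} (hf : IsCadlag f) (m : ℕ) :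
    Tendsto (fun n => dJ1T ((m:ℝ) + 1) (restrictD ((m:ℝ) + 1) f)
      (restrictD ((m:ℝ) + 1) (stepPath n (code n f)).1)) atTop (𝓝 0) := by
  rw [Metric.tendsto_atTop]
  intro ε hε
  obtain ⟨C, hC⟩ := hf.bddT ((m:ℝ) + 1)
  have hC0 : 0 ≤ C := (abs_nonneg _).trans (hC 0 ⟨le_rfl, by positivity⟩)
  obtain ⟨N0, hN0, h⟩ := gridP_all hf (half_pos (half_pos hε)) (T := (m:ℝ) + 1) (by positivity)
  obtain ⟨K, hK⟩ := exists_nat_ge (max N0 (max (4 * (C + 1) / ε) m))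
  refine ⟨K, fun n hn => ?_⟩
  have hKn : (K:ℝ) ≤ n := by exact_mod_cast hn
  have a1 : N0 ≤ (n:ℝ) + 1 := by linarith [(le_max_left _ _).trans hK]
  have a2 : 4 * (C + 1) / ε ≤ (n:ℝ) + 1 := by
    linarith [(le_max_left _ _).trans ((le_max_right _ _).trans hK)]
  have a3 : m ≤ n := by
    have : (m:ℝ) ≤ n := by linarith [(le_max_right _ _).trans ((le_max_right _ _).trans hK)]
    exact_mod_cast this
  obtain ⟨e, e0, eT, he⟩ := h _ a1
  have hn0 : (0:ℝ) < (n:ℝ) + 1 := by positivity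
  have hceil : (⌈((n:ℝ) + 1) * ((m:ℝ) + 1)⌉ : ℝ) / ((n:ℝ) + 1) = (m:ℝ) + 1 := by
    have : ((n:ℝ) + 1) * ((m:ℝ) + 1) = (((n + 1) * (m + 1) : ℤ) : ℝ) := by push_cast; ring
    rw [this, Int.ceil_intCast, ← this]
    field_simp
  rw [hceil] at eT he
  have hfl : (⌊((n:ℝ) + 1) * ((m:ℝ) + 1)⌋ : ℝ) / ((n:ℝ) + 1) = (m:ℝ) + 1 := by
    have : ((n:ℝ) + 1) * ((m:ℝ) + 1) = (((n + 1) * (m + 1) : ℤ) : ℝ) := by push_cast; ring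
    rw [this, Int.floor_intCast, ← this]
    field_simp
  have hsmall : (C + 1) * (1 / ((n:ℝ) + 1)) ≤ ε / 4 := by
    rw [div_le_iff₀ hε] at a2
    rw [mul_one_div, div_le_iff₀ hn0]
    linarith
  have hinv : 0 < 1 / ((n:ℝ) + 1) := by positivity
  rw [Real.dist_eq, sub_zero, abs_of_nonneg (dJ1T_nonneg _ _ _)]
  refine lt_of_le_of_lt (dJ1T_le (r := ε / 2) (by linarith) e e0 eT ?_ ?_) (by linarith)
  · intro t ht
    have := (he t ht).1
    nlinarith
  · intro t ht
    have b1 := (he t ht).1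
    have b2 : |f (e t) - f (⌊((n:ℝ) + 1) * t⌋ / ((n:ℝ) + 1))| ≤ ε / 2 / 2 := by
      rcases ht.2.lt_or_eq with h' | h'
      · exact (he t ht).2 h'
      · rw [h', hfl, eT, sub_self, abs_zero]; linarith
    have b3 := stepPath_code a3 (f := f) ht
    have b4 := abs_wgt_le ht.2
    have b5 := abs_wgt_sub_le ((m:ℝ) + 1) (e t) t
    have b6 := hC (e t) (orderIso_mem e0 eT ht)
    rw [restrictD_eq, restrictD_eq]
    set g := (stepPath n (code n f)).1 t
    set z := f (⌊((n:ℝ) + 1) * t⌋ / ((n:ℝ) + 1))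
    set w := wgt ((m:ℝ) + 1) t
    set w' := wgt ((m:ℝ) + 1) (e t)
    have c0 : w' * f (e t) - w * g = (w' - w) * f (e t) + w * (f (e t) - g) := by ring
    have c1 : |f (e t) - g| ≤ ε / 2 / 2 + 1 / ((n:ℝ) + 1) := by
      have := abs_sub_le (f (e t)) z g
      rw [abs_sub_comm z g] at this
      linarith
    have c2 : |(w' - w) * f (e t)| ≤ 1 / ((n:ℝ) + 1) * C := by
      rw [abs_mul]
      exact mul_le_mul (b5.trans b1) b6 (abs_nonneg _) hinv.le
    have c3 : |w * (f (e t) - g)| ≤ |f (e t) - g| := by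
      rw [abs_mul]
      exact mul_le_of_le_one_left (abs_nonneg _) b4
    rw [c0]
    refine (abs_add_le _ _).trans ?_
    linarith

lemma tendsto_dJ1_step {f : ℝ → ℝ} (hf : IsCadlag f) :
    Tendsto (fun n => dJ1 f (stepPath n (code n f)).1) atTop (𝓝 0) := by
  have h : Tendsto (fun n => ∑' m, dterm m f (stepPath n (code n f)).1) atTop
      (𝓝 (∑' _ : ℕ, (0:ℝ))) := by
    refine tendsto_tsum_of_dominated_convergence summable_half ?_ ?_
    · intro m
      have := ((tendsto_const_nhds (x := (1:ℝ))).min (tendsto_dJ1T_step hf m)).const_mul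
        ((2:ℝ)⁻¹ ^ (m + 1))
      simpa [dterm] using this
    · refine Eventually.of_forall fun n m => ?_
      rw [Real.norm_of_nonneg (dterm_nonneg _ _ _)]
      exact dterm_le _ _ _
  simpa [dJ1, dterm] using h

lemma measurable_of_eval {Ω : Type*} [MeasurableSpace Ω] (G : Ω → Dfun)
    (hG : ∀ t : ℝ, 0 ≤ t → Measurable fun ω => (G ω).1 t) : @Measurable _ _ _ J1Borel G := by
  let := J1Metric
  let : MeasurableSpace Dfun := J1Borel
  have : BorelSpace Dfun := ⟨by change @borel Dfun J1Top = _; rw [J1Top_eq]⟩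
  refine measurable_of_tendsto_metrizable (f := fun n ω => stepPath n (code n (G ω).1)) ?_ ?_
  · intro n
    refine (measurable_of_countable (stepPath n)).comp ?_
    refine measurable_pi_lambda _ fun j => ?_
    exact Int.measurable_floor.comp ((hG _ (by positivity)).const_mul _)
  · rw [tendsto_pi_nhds]
    intro ω
    rw [tendsto_iff_dist_tendsto_zero]
    simp_rw [dist_comm _ (G ω)]
    exact tendsto_dJ1_step (G ω).2

/-! ### Joint measurability and the inverse occupation time -/

lemma measurable_joint {Ω : Type*} [MeasurableSpace Ω] (X : Ω → ℝ → ℝ)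
    (hX : ∀ ω, IsCadlag (X ω)) (hm : ∀ t : ℝ, 0 ≤ t → Measurable fun ω => X ω t) :
    Measurable fun p : Ω × ℝ => X p.1 (max p.2 0) := by
  refine measurable_of_tendsto_metrizable
    (f := fun (n : ℕ) (p : Ω × ℝ) =>
      (fun q : Ω × ℕ => X q.1 (((q.2 : ℝ) + 1) / ((n:ℝ) + 1)))
        (p.1, ⌊((n:ℝ) + 1) * p.2⌋₊)) ?_ ?_
  · intro n
    have hq : Measurable fun q : Ω × ℕ => X q.1 (((q.2 : ℝ) + 1) / ((n:ℝ) + 1)) :=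
      measurable_from_prod_countable_left fun k : ℕ =>
        hm (((k : ℝ) + 1) / ((n:ℝ) + 1)) (by positivity)
    refine hq.comp ?_
    exact measurable_fst.prodMk (Nat.measurable_floor.comp (measurable_snd.const_mul _))
  · rw [tendsto_pi_nhds]
    rintro ⟨ω, t⟩
    refine ((hX ω).1 (max t 0) (le_max_right _ _)).comp ?_
    have key : ∀ n : ℕ, max t 0 ≤ ((⌊((n:ℝ) + 1) * t⌋₊ : ℝ) + 1) / ((n:ℝ) + 1) ∧
        ((⌊((n:ℝ) + 1) * t⌋₊ : ℝ) + 1) / ((n:ℝ) + 1) ≤ max t 0 + 1 / ((n:ℝ) + 1) := by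
      intro n
      have hn : (0:ℝ) < (n:ℝ) + 1 := by positivity
      constructor
      · rw [max_le_iff]
        constructor
        · rw [le_div_iff₀ hn]
          have := Nat.lt_floor_add_one (((n:ℝ) + 1) * t)
          linarith
        · positivity
      · rw [add_div]
        gcongr
        rw [div_le_iff₀ hn]
        rcases le_total 0 t with h | h
        · rw [max_eq_left h, mul_comm]
          exact Nat.floor_le (by positivity)
        · rw [max_eq_right h, zero_mul, Nat.floor_of_nonpos]
          · simp
          · exact mul_nonpos_of_nonneg_of_nonpos hn.le h
    refine tendsto_nhdsWithin_of_tendsto_nhds_of_eventually_within _ ?_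
      (Eventually.of_forall fun n => (key n).1)
    refine tendsto_of_tendsto_of_tendsto_of_le_of_le tendsto_const_nhds ?_
      (fun n => (key n).1) (fun n => (key n).2)
    simpa using (tendsto_one_div_add_atTop_nhds_zero_nat (𝕜 := ℝ)).const_add (max t 0)

/-- The indicator of being above `a`, frozen at negative times. -/
def chi (a : ℝ) (f : ℝ → ℝ) (z : ℝ) : ℝ :=
  {z : ℝ | a < f (max z 0)}.indicator (fun _ => (1:ℝ)) z

lemma chi_nonneg (a : ℝ) (f : ℝ → ℝ) (z : ℝ) : 0 ≤ chi a f z :=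
  indicator_nonneg (fun _ _ => zero_le_one) _

lemma chi_le_one (a : ℝ) (f : ℝ → ℝ) (z : ℝ) : chi a f z ≤ 1 :=
  indicator_le' (fun _ _ => le_rfl) (fun _ _ => zero_le_one) _

lemma IsCadlag.measurable {f : ℝ → ℝ} (hf : IsCadlag f) : Measurable fun t => f (max t 0) :=
  (measurable_joint (Ω := Unit) (fun _ => f) (fun _ => hf) (fun _ _ => measurable_const)).comp
    (measurable_const.prodMk measurable_id : Measurable fun t : ℝ => ((), t))

lemma IsCadlag.measurable_chi {f : ℝ → ℝ} (hf : IsCadlag f) (a : ℝ) : Measurable (chi a f) :=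
  measurable_const.indicator (measurableSet_lt measurable_const hf.measurable)

lemma occUpper_eq (a : ℝ) (f : ℝ → ℝ) {s : ℝ} (hs : 0 ≤ s) :
    occUpper a f s = ∫ z in (0:ℝ)..s, chi a f z := by
  unfold occUpper
  refine intervalIntegral.integral_congr fun z hz => ?_
  rw [uIcc_of_le hs] at hz
  simp only [chi, indicator, mem_ofPred_eq, max_eq_left hz.1]

lemma IsCadlag.intervalIntegrable_chi {f : ℝ → ℝ} (hf : IsCadlag f) (a s t : ℝ) :
    IntervalIntegrable (chi a f) volume s t := by
  refine (intervalIntegrable_const (c := (1:ℝ))).mono_fun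
    (hf.measurable_chi a).aestronglyMeasurable (Eventually.of_forall fun z => ?_)
  change ‖chi a f z‖ ≤ ‖(1:ℝ)‖
  rw [Real.norm_of_nonneg (chi_nonneg a f z)]
  simpa using chi_le_one a f z

lemma occUpper_zero (a : ℝ) (f : ℝ → ℝ) : occUpper a f 0 = 0 := by
  simp [occUpper]

lemma occUpper_step {f : ℝ → ℝ} (hf : IsCadlag f) (a : ℝ) {s t : ℝ} (hs : 0 ≤ s) (hst : s ≤ t) :
    occUpper a f s ≤ occUpper a f t ∧ occUpper a f t ≤ occUpper a f s + (t - s) := by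
  have h := intervalIntegral.integral_add_adjacent_intervals
    (hf.intervalIntegrable_chi a 0 s) (hf.intervalIntegrable_chi a s t)
  rw [occUpper_eq a f hs, occUpper_eq a f (hs.trans hst), ← h]
  have h1 : 0 ≤ ∫ z in s..t, chi a f z :=
    intervalIntegral.integral_nonneg hst fun z _ => chi_nonneg a f z
  have h2 : ∫ z in s..t, chi a f z ≤ ∫ z in s..t, (1:ℝ) :=
    intervalIntegral.integral_mono_on hst (hf.intervalIntegrable_chi a s t)
      intervalIntegrable_const fun z _ => chi_le_one a f z
  rw [intervalIntegral.integral_const, smul_eq_mul, mul_one] at h2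
  constructor <;> linarith

lemma occUpper_unbounded {f : ℝ → ℝ} (hf : IsCadlag f) {a : ℝ} (h : InfAbove a f) (t : ℝ) :
    ∃ s, 0 < s ∧ t < occUpper a f s := by
  by_contra! hcon
  set S : Set ℝ := {z | a < f (max z 0)} with hS
  have hSm : MeasurableSet S := measurableSet_lt measurable_const hf.measurable
  have hle : ∀ n : ℕ, volume (S ∩ Ioc (0:ℝ) n) ≤ ENNReal.ofReal t := by
    intro n
    rcases Nat.eq_zero_or_pos n with hn | hn
    · simp [hn]
    have hn' : (0:ℝ) < n := by exact_mod_cast hn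
    have h1 := hcon n hn'
    rw [occUpper_eq a f hn'.le, intervalIntegral.integral_of_le hn'.le] at h1
    have h2 : ∫ z in Ioc (0:ℝ) n, chi a f z = (volume (S ∩ Ioc (0:ℝ) n)).toReal := by
      have : chi a f = S.indicator 1 := rfl
      rw [this, integral_indicator_one hSm, measureReal_def, Measure.restrict_apply hSm]
    rw [h2] at h1
    rw [← ENNReal.ofReal_toReal (a := volume (S ∩ Ioc (0:ℝ) n))]
    · exact ENNReal.ofReal_le_ofReal h1
    · refine ne_top_of_le_ne_top ?_ (measure_mono inter_subset_right)
      simp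
  have hU : volume (⋃ n : ℕ, S ∩ Ioc (0:ℝ) n) ≤ ENNReal.ofReal t := by
    rw [Monotone.measure_iUnion]
    · exact iSup_le hle
    · intro m n hmn
      have : (m:ℝ) ≤ n := by exact_mod_cast hmn
      exact inter_subset_inter_right _ (Ioc_subset_Ioc_right this)
  have hsub : {t : ℝ | 0 ≤ t ∧ a < f t} ⊆ {0} ∪ ⋃ n : ℕ, S ∩ Ioc (0:ℝ) n := by
    rintro x ⟨hx0, hx⟩
    rcases hx0.lt_or_eq with h | h
    · right
      obtain ⟨n, hn⟩ := exists_nat_ge x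
      refine mem_iUnion.2 ⟨n, ?_, h, hn⟩
      change a < f (max x 0)
      rwa [max_eq_left hx0]
    · left; exact h.symm
  have := (measure_mono hsub).trans (measure_union_le (μ := volume) _ _)
  rw [show volume {t : ℝ | 0 ≤ t ∧ a < f t} = ⊤ from h] at this
  have h3 : volume ({0} : Set ℝ) + volume (⋃ n : ℕ, S ∩ Ioc (0:ℝ) n) ≤ ENNReal.ofReal t := by
    simpa using hU
  exact absurd (this.trans h3) (by simp)

lemma occUpperInv_nonneg (a : ℝ) (f : ℝ → ℝ) (t : ℝ) : 0 ≤ occUpperInv a f t :=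
  Real.sInf_nonneg fun _ hs => hs.1.le

lemma occUpperInv_le {a : ℝ} {f : ℝ → ℝ} {s t : ℝ} (hs : 0 < s) (hst : t < occUpper a f s) :
    occUpperInv a f t ≤ s := csInf_le ⟨0, fun _ hs => hs.1.le⟩ ⟨hs, hst⟩

lemma occUpperInv_lt_iff {f : ℝ → ℝ} (hf : IsCadlag f) {a : ℝ} (h : InfAbove a f) {t u : ℝ} :
    occUpperInv a f t < u ↔ ∃ s, (0 < s ∧ t < occUpper a f s) ∧ s < u :=
  csInf_lt_iff ⟨0, fun _ hs => hs.1.le⟩ (occUpper_unbounded hf h t)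

lemma occUpperInv_mono {f : ℝ → ℝ} (hf : IsCadlag f) {a : ℝ} (h : InfAbove a f) :
    Monotone (occUpperInv a f) := by
  intro t t' htt
  refine le_of_forall_gt fun u hu => ?_
  rw [occUpperInv_lt_iff hf h] at hu ⊢
  obtain ⟨s, ⟨h1, h2⟩, h3⟩ := hu
  exact ⟨s, ⟨h1, htt.trans_lt h2⟩, h3⟩

lemma occUpperInv_strict {f : ℝ → ℝ} (hf : IsCadlag f) {a : ℝ} (h : InfAbove a f) {t t' : ℝ}
    (ht : 0 ≤ t) (htt : t < t') : occUpperInv a f t < occUpperInv a f t' := by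
  set L := occUpperInv a f t' with hL
  have hL0 : 0 ≤ L := occUpperInv_nonneg a f t'
  have hA : t' ≤ occUpper a f L := by
    refine le_of_forall_pos_le_add fun ε hε => ?_
    obtain ⟨s, ⟨h1, h2⟩, h3⟩ := (occUpperInv_lt_iff hf h).1 (lt_add_of_pos_right L hε)
    have h4 : L ≤ s := occUpperInv_le h1 h2
    have := (occUpper_step hf a hL0 h4).2
    linarith
  have h1 := (occUpper_step hf a le_rfl hL0).2
  rw [occUpper_zero] at h1
  have h2 : 0 < L - (t' - t) / 2 := by linarith
  have h3 := (occUpper_step hf a h2.le (by linarith : L - (t' - t) / 2 ≤ L)).2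
  have := occUpperInv_le (t := t) h2 (by linarith)
  linarith

lemma isCadlag_ffLeft {f : ℝ → ℝ} (hf : IsCadlag f) {a : ℝ} (h : InfAbove a f) :
    IsCadlag (ffLeft a f) := by
  have hmono := occUpperInv_mono hf h
  constructor
  · intro t ht
    refine (hf.1 _ (occUpperInv_nonneg a f t)).comp ?_
    have hge : ∀ᶠ t' in 𝓝[≥] t, occUpperInv a f t ≤ occUpperInv a f t' := by
      filter_upwards [self_mem_nhdsWithin] with t' ht'
      exact hmono ht'
    refine tendsto_nhdsWithin_of_tendsto_nhds_of_eventually_within _ ?_ hge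
    refine tendsto_order.2 ⟨fun u hu => hge.mono fun t' h' => hu.trans_le h', fun u hu => ?_⟩
    obtain ⟨s, ⟨h1, h2⟩, h3⟩ := (occUpperInv_lt_iff hf h).1 hu
    filter_upwards [Ico_mem_nhdsGE h2] with t' ht'
    exact (occUpperInv_le h1 ht'.2).trans_lt h3
  · intro t ht
    set L := sSup (occUpperInv a f '' Iio t) with hL
    have hbdd : BddAbove (occUpperInv a f '' Iio t) :=
      ⟨occUpperInv a f t, by rintro _ ⟨x, hx, rfl⟩; exact hmono (le_of_lt hx)⟩
    have hlt : ∀ t' ∈ Ico 0 t, occUpperInv a f t' < L := by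
      intro t' ht'
      have : t' < (t' + t) / 2 := by linarith [ht'.2]
      refine (occUpperInv_strict hf h ht'.1 this).trans_le (le_csSup hbdd ⟨_, ?_, rfl⟩)
      simp only [mem_Iio]; linarith [ht'.2]
    have hL0 : 0 < L := (occUpperInv_nonneg a f 0).trans_lt (hlt 0 ⟨le_rfl, ht⟩)
    obtain ⟨l, hl⟩ := hf.2 L hL0
    refine ⟨l, hl.comp ?_⟩
    refine tendsto_nhdsWithin_of_tendsto_nhds_of_eventually_within _
      (hmono.tendsto_nhdsLT t) ?_
    filter_upwards [Ico_mem_nhdsLT ht] with t' ht'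
    exact hlt t' ht'

lemma measurable_occUpper {Ω : Type*} [MeasurableSpace Ω] (X : Ω → ℝ → ℝ)
    (hX : ∀ ω, IsCadlag (X ω)) (hm : ∀ t : ℝ, 0 ≤ t → Measurable fun ω => X ω t) (a : ℝ)
    {s : ℝ} (hs : 0 ≤ s) : Measurable fun ω => occUpper a (X ω) s := by
  have h1 : Measurable fun p : Ω × ℝ => chi a (X p.1) p.2 := by
    have : (fun p : Ω × ℝ => chi a (X p.1) p.2) =
        {p : Ω × ℝ | a < X p.1 (max p.2 0)}.indicator (fun _ => (1:ℝ)) := by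
      ext p
      simp only [chi, indicator, mem_ofPred_eq]
    rw [this]
    exact measurable_const.indicator (measurableSet_lt measurable_const (measurable_joint X hX hm))
  have h2 : (fun ω => occUpper a (X ω) s) = fun ω => ∫ z in Ioc 0 s, chi a (X ω) z := by
    ext ω
    rw [occUpper_eq a _ hs, intervalIntegral.integral_of_le hs]
  rw [h2]
  exact (h1.stronglyMeasurable.integral_prod_right' (ν := volume.restrict (Ioc 0 s))).measurable

lemma measurable_occUpperInv {Ω : Type*} [MeasurableSpace Ω] (X : Ω → ℝ → ℝ)
    (hX : ∀ ω, IsCadlag (X ω)) (hm : ∀ t : ℝ, 0 ≤ t → Measurable fun ω => X ω t) (a : ℝ)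
    (hI : ∀ ω, InfAbove a (X ω)) (t : ℝ) : Measurable fun ω => occUpperInv a (X ω) t := by
  refine measurable_of_Iio fun u => ?_
  have : (fun ω => occUpperInv a (X ω) t) ⁻¹' Iio u =
      ⋃ (q : ℚ) (_ : 0 < (q:ℝ) ∧ (q:ℝ) < u), {ω | t < occUpper a (X ω) q} := by
    ext ω
    simp only [mem_preimage, mem_Iio, occUpperInv_lt_iff (hX ω) (hI ω), mem_iUnion, mem_ofPred_eq,
      exists_prop]
    constructor
    · rintro ⟨s, ⟨h1, h2⟩, h3⟩
      obtain ⟨q, hq1, hq2⟩ := exists_rat_btwn h3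
      exact ⟨q, ⟨h1.trans hq1, hq2⟩, h2.trans_le (occUpper_step (hX ω) a h1.le hq1.le).1⟩
    · rintro ⟨q, ⟨h1, h2⟩, h3⟩
      exact ⟨q, ⟨h1, h3⟩, h2⟩
  rw [this]
  refine MeasurableSet.iUnion fun q => MeasurableSet.iUnion fun hq => ?_
  exact measurableSet_lt measurable_const (measurable_occUpper X hX hm a hq.1.le)

/-- Proposition 3.12 / `prop:ff_meas`. For every `a ∈ ℝ` the left
fast-forwarding map `N_a^l : D_{a,∞}([0,∞),ℝ) → D([0,∞),ℝ)` (which indeed takes values in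
`D([0,∞),ℝ)`) is measurable from the trace on `D_{a,∞}([0,∞),ℝ)` of the Borel σ-algebra
of the Skorokhod `J1` topology to the Borel σ-algebra of the Skorokhod `J1` topology. -/
theorem ffLeft_measurable (a : ℝ) :
    ∃ F : {f : Dfun // InfAbove a f.1} → Dfun,
      (∀ f, (F f).1 = ffLeft a f.1.1) ∧
      @Measurable _ _
        (MeasurableSpace.comap (fun f : {f : Dfun // InfAbove a f.1} => f.1) J1Borel)
        J1Borel F := by
  let : MeasurableSpace {f : Dfun // InfAbove a f.1} :=
    MeasurableSpace.comap (fun f : {f : Dfun // InfAbove a f.1} => f.1) J1Borel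
  refine ⟨fun f => ⟨ffLeft a f.1.1, isCadlag_ffLeft f.1.2 f.2⟩, fun f => rfl, ?_⟩
  refine measurable_of_eval _ fun t _ => ?_
  have hm : ∀ t : ℝ, 0 ≤ t → Measurable fun f : {f : Dfun // InfAbove a f.1} => f.1.1 t :=
    fun t ht => (@Measurable.comp _ _ _ _ J1Borel _ _ _ (measurable_eval ht)
      (@comap_measurable _ _ J1Borel (fun f : {f : Dfun // InfAbove a f.1} => f.1)))
  have h1 := measurable_joint (fun f : {f : Dfun // InfAbove a f.1} => f.1.1)
    (fun f => f.1.2) hm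
  have h2 := measurable_occUpperInv (fun f : {f : Dfun // InfAbove a f.1} => f.1.1)
    (fun f => f.1.2) hm a (fun f => f.2) t
  have h3 := h1.comp (measurable_id.prodMk h2)
  have h4 : (fun f : {f : Dfun // InfAbove a f.1} => ffLeft a f.1.1 t) =
      (fun p : {f : Dfun // InfAbove a f.1} × ℝ => p.1.1.1 (max p.2 0)) ∘
        fun f => (id f, occUpperInv a f.1.1 t) := by
    ext f
    simp only [Function.comp, ffLeft, id, max_eq_left (occUpperInv_nonneg a f.1.1 t)]
  change Measurable (fun f : {f : Dfun // InfAbove a f.1} => ffLeft a f.1.1 t)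
  rw [h4]
  exact h3
end
end

section
/- Assume (H0). For h > 0 let G_{j,h} (j ≥ 0) be the Grünwald coefficients defined by ψ((1−ξ)/h) = Σ_{j=0}^∞ G_{j,h} ξ^j for |ξ| < 1, and define ∂^ψ_{−h} g(x) = Σ_{j=0}^∞ G_{j,h} · g(x+(j−1)h). Then for every g ∈ C_c^∞(ℝ), sup_{x∈ℝ} | ∂^ψ_{−h} g(x) − D^ψ_{−,∞} g(x) | → 0 as h → 0, where D^ψ_{−,∞} g(x) = ∫_{(0,∞)} ( g(x+y) − g(x) − y·g'(x) ) φ(dy). -/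
open MeasureTheory Set Filter Topology

noncomputable section

/-- Assumption (H0): `μ` is a nonnegative Borel measure on `(0,∞)` with
`∫ (y² ∧ y) μ(dy) < ∞` and `∫_{(0,1)} y μ(dy) = ∞`. -/
def H0 (μ : Measure ℝ) : Prop :=
  μ (Iic 0) = 0 ∧
  (∫⁻ y, ENNReal.ofReal (min (y ^ 2) y) ∂μ) < ⊤ ∧
  (∫⁻ y in Ioo (0:ℝ) 1, ENNReal.ofReal y ∂μ) = ⊤

/-- The Laplace exponent `ψ(ξ) = ∫ (e^{−ξy} − 1 + ξy) μ(dy)`. -/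
noncomputable def psiH (μ : Measure ℝ) (ξ : ℝ) : ℝ :=
  ∫ y, (Real.exp (-(ξ * y)) - 1 + ξ * y) ∂μ


/-- Poisson weights. -/
def qP (l : ℝ) (j : ℕ) : ℝ := Real.exp (-l) * (l ^ j / (j.factorial : ℝ))

/-- Grünwald weights. -/
def pP (l : ℝ) (j : ℕ) : ℝ :=
  qP l j - (if j = 0 then 1 else 0) + l * ((if j = 0 then 1 else 0) - (if j = 1 then 1 else 0))

lemma qP_nonneg {l : ℝ} (hl : 0 ≤ l) (j : ℕ) : 0 ≤ qP l j := by
  unfold qP; positivity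

lemma hasSum_exp_real (x : ℝ) : HasSum (fun n : ℕ => x ^ n / (n.factorial : ℝ)) (Real.exp x) := by
  have := NormedSpace.expSeries_div_hasSum_exp x
  rwa [← Real.exp_eq_exp_ℝ] at this

lemma hasSum_qP (l : ℝ) : HasSum (qP l) 1 := by
  have := (hasSum_exp_real l).mul_left (Real.exp (-l))
  rwa [← Real.exp_add, neg_add_cancel, Real.exp_zero] at this

lemma qP_succ (l : ℝ) (j : ℕ) : ((j : ℝ) + 1) * qP l (j + 1) = l * qP l j := by
  unfold qP
  rw [Nat.factorial_succ]
  have : (j.factorial : ℝ) ≠ 0 := by positivity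
  have : (j : ℝ) + 1 ≠ 0 := by positivity
  push_cast
  field_simp
  ring

lemma hasSum_qP1 (l : ℝ) : HasSum (fun j : ℕ => qP l j * (j : ℝ)) l := by
  rw [← hasSum_nat_add_iff' 1]
  have := (hasSum_qP l).mul_left l
  simp only [mul_one] at this
  simp only [Finset.range_one, Finset.sum_singleton, Nat.cast_zero, mul_zero, sub_zero]
  refine this.congr_fun fun n => ?_
  push_cast
  linarith [qP_succ l n]

lemma hasSum_qP2 (l : ℝ) : HasSum (fun j : ℕ => qP l j * ((j : ℝ) * ((j : ℝ) - 1))) (l ^ 2) := by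
  rw [← hasSum_nat_add_iff' 1]
  have := (hasSum_qP1 l).mul_left l
  simp only [Finset.range_one, Finset.sum_singleton, Nat.cast_zero, mul_zero, sub_zero, zero_mul]
  rw [sq]
  refine this.congr_fun fun n => ?_
  push_cast
  linear_combination (n : ℝ) * qP_succ l n

lemma hasSum_pP {l : ℝ} {a : ℕ → ℝ} {S : ℝ} (h : HasSum (fun j => qP l j * a j) S) :
    HasSum (fun j => pP l j * a j) (S - a 0 + l * (a 0 - a 1)) := by
  have h0 : HasSum (fun j : ℕ => if j = 0 then a 0 else 0) (a 0) := hasSum_ite_eq 0 (a 0)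
  have h1 : HasSum (fun j : ℕ => if j = 1 then a 1 else 0) (a 1) := hasSum_ite_eq 1 (a 1)
  refine ((h.sub h0).add ((h0.sub h1).mul_left l)).congr_fun fun j => ?_
  unfold pP
  by_cases hj : j = 0
  · subst hj; simp; ring
  · by_cases hj1 : j = 1
    · subst hj1; simp; ring
    · simp [hj, hj1]

lemma pP_one (l : ℝ) : pP l 1 = l * Real.exp (-l) - l := by
  simp [pP, qP]; ring

lemma hasSum_abs_pP {l : ℝ} (hl : 0 ≤ l) :
    HasSum (fun j => |pP l j|) (2 * l * (1 - Real.exp (-l))) := by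
  have h : HasSum (fun j => pP l j) 0 := by
    have := hasSum_pP (l := l) (a := fun _ => 1) (S := 1) (by simpa using hasSum_qP l)
    simpa using this
  have h1 : HasSum (fun j : ℕ => if j = 1 then pP l 1 else 0) (pP l 1) := hasSum_ite_eq 1 _
  have h2 := h.sub (h1.mul_left 2)
  have e : (0 - 2 * pP l 1) = 2 * l * (1 - Real.exp (-l)) := by rw [pP_one]; ring
  rw [e] at h2
  refine h2.congr_fun fun j => ?_
  by_cases hj1 : j = 1
  · subst hj1
    have : pP l 1 ≤ 0 := by
      rw [pP_one]
      have : Real.exp (-l) ≤ 1 := Real.exp_le_one_iff.2 (by linarith)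
      nlinarith
    rw [abs_of_nonpos this]; simp; ring
  · have : 0 ≤ pP l j := by
      by_cases hj : j = 0
      · subst hj
        have := Real.add_one_le_exp (-l)
        simp [pP, qP]; linarith
      · have := qP_nonneg hl j
        simp [pP, hj, hj1, this]
    rw [abs_of_nonneg this]; simp [hj1]

lemma summable_qP_bdd {l : ℝ} (hl : 0 ≤ l) {a : ℕ → ℝ} {M : ℝ} (ha : ∀ j, |a j| ≤ M) :
    Summable (fun j => qP l j * a j) := by
  refine Summable.of_norm_bounded ((hasSum_qP l).summable.mul_right M) fun j => ?_
  rw [norm_mul, Real.norm_of_nonneg (qP_nonneg hl j)]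
  exact mul_le_mul_of_nonneg_left (ha j) (qP_nonneg hl j)

lemma abs_hasSum_le {f b : ℕ → ℝ} {s t : ℝ} (hf : HasSum f s) (hb : HasSum b t)
    (h : ∀ j, |f j| ≤ b j) : |s| ≤ t := by
  rw [abs_le]
  constructor
  · exact hasSum_le (fun j => (abs_le.1 (h j)).1) hb.neg hf
  · exact hasSum_le (fun j => (abs_le.1 (h j)).2) hf hb

lemma coeff_unique {a b : ℕ → ℝ} {f : ℝ → ℝ}
    (ha : ∀ ξ : ℝ, |ξ| < 1 → HasSum (fun j : ℕ => a j * ξ ^ j) (f ξ))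
    (hb : ∀ ξ : ℝ, |ξ| < 1 → HasSum (fun j : ℕ => b j * ξ ^ j) (f ξ)) : a = b := by
  have key : ∀ c : ℕ → ℝ, (∀ ξ : ℝ, |ξ| < 1 → HasSum (fun j : ℕ => c j * ξ ^ j) (f ξ)) →
      HasFPowerSeriesAt f (FormalMultilinearSeries.ofScalars ℝ c) 0 := by
    intro c hc
    rw [hasFPowerSeriesAt_iff]
    filter_upwards [Metric.ball_mem_nhds (0:ℝ) one_pos] with ξ hξ
    have : |ξ| < 1 := by simpa using hξ
    simpa [FormalMultilinearSeries.coeff_ofScalars, mul_comm] using hc ξ this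
  have := (key a ha).eq_formalMultilinearSeries (key b hb)
  ext j
  have h := congrArg (fun p => FormalMultilinearSeries.coeff p j) this
  simpa [FormalMultilinearSeries.coeff_ofScalars] using h

lemma ae_pos {μ : Measure ℝ} (h0 : H0 μ) : ∀ᵐ y ∂μ, 0 < y := by
  rw [ae_iff]
  convert h0.1 using 2
  ext; simp

lemma min_integrable {μ : Measure ℝ} (h0 : H0 μ) : Integrable (fun y : ℝ => min (y ^ 2) y) μ := by
  refine ⟨by fun_prop, ?_⟩
  rw [hasFiniteIntegral_iff_ofReal]
  · exact h0.2.1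
  · filter_upwards [ae_pos h0] with y hy
    exact le_min (by positivity) hy.le

lemma pP_cont (h : ℝ) (j : ℕ) : Continuous (fun y => pP (y / h) j) := by
  unfold pP qP; fun_prop

lemma one_sub_exp_bound {h y : ℝ} (hh : 0 < h) (hy : 0 < y) :
    2 * (y / h) * (1 - Real.exp (-(y / h))) ≤ 2 * (1 / h + 1 / h ^ 2) * min (y ^ 2) y := by
  have hl : 0 < y / h := by positivity
  have h1 : 1 - Real.exp (-(y / h)) ≤ 1 := by linarith [Real.exp_pos (-(y / h))]
  have h2 : 1 - Real.exp (-(y / h)) ≤ y / h := by linarith [Real.add_one_le_exp (-(y / h))]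
  have e1 : 1 / h * y = y / h := by ring
  have e2 : 1 / h ^ 2 * y ^ 2 = (y / h) ^ 2 := by ring
  have p1 : 0 < 1 / h := by positivity
  have p2 : 0 < 1 / h ^ 2 := by positivity
  rcases min_cases (y ^ 2) y with ⟨e, _⟩ | ⟨e, _⟩ <;> rw [e]
  · have : 0 ≤ 1 / h * y ^ 2 := by positivity
    nlinarith
  · have : 0 ≤ 1 / h ^ 2 * y := by positivity
    nlinarith

/-- Interchange of sum and integral against a bounded sequence. -/
lemma hasSum_integral_pP {μ : Measure ℝ} (h0 : H0 μ) {h : ℝ} (hh : 0 < h) {a : ℕ → ℝ} {M : ℝ}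
    (ha : ∀ j, |a j| ≤ M) {F : ℝ → ℝ}
    (hF : ∀ y, 0 < y → HasSum (fun j => pP (y / h) j * a j) (F y)) :
    HasSum (fun j => (∫ y, pP (y / h) j ∂μ) * a j) (∫ y, F y ∂μ) := by
  have hs := fun y (hy : 0 < y) => (hasSum_abs_pP (l := y / h) (by positivity)).mul_right M
  have key := hasSum_integral_of_dominated_convergence (μ := μ)
    (F := fun j y => pP (y / h) j * a j) (f := F) (fun j y => |pP (y / h) j| * M)
    (fun j => ((pP_cont h j).mul continuous_const).aestronglyMeasurable)
    (fun j => .of_forall fun y => by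
      rw [norm_mul, Real.norm_eq_abs, Real.norm_eq_abs]
      exact mul_le_mul_of_nonneg_left (ha j) (abs_nonneg _))
    (by filter_upwards [ae_pos h0] with y hy using (hs y hy).summable)
    (by
      have hM : 0 ≤ M := (abs_nonneg _).trans (ha 0)
      have hi : Integrable (fun y => 2 * (y / h) * (1 - Real.exp (-(y / h))) * M) μ := by
        refine Integrable.mono' (((min_integrable h0).const_mul (2 * (1 / h + 1 / h ^ 2))).mul_const M)
          (by fun_prop) ?_
        filter_upwards [ae_pos h0] with y hy
        have hp : 0 ≤ 1 - Real.exp (-(y / h)) := by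
          have : Real.exp (-(y / h)) ≤ 1 := Real.exp_le_one_iff.2 (by
            have : 0 < y / h := by positivity
            linarith)
          linarith
        rw [Real.norm_of_nonneg (by positivity)]
        exact mul_le_mul_of_nonneg_right (one_sub_exp_bound hh hy) hM
      refine hi.congr ?_
      filter_upwards [ae_pos h0] with y hy using (hs y hy).tsum_eq.symm)
    (by filter_upwards [ae_pos h0] with y hy using hF y hy)
  simpa only [integral_mul_const] using key

lemma G_eq {μ : Measure ℝ} (h0 : H0 μ) {h : ℝ} (hh : 0 < h) {c : ℕ → ℝ}
    (hc : ∀ ξ : ℝ, |ξ| < 1 → HasSum (fun j : ℕ => c j * ξ ^ j) (psiH μ ((1 - ξ) / h))) :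
    c = fun j => ∫ y, pP (y / h) j ∂μ := by
  refine coeff_unique hc fun ξ hξ => ?_
  refine hasSum_integral_pP h0 hh (M := 1) (a := fun j => ξ ^ j)
    (fun j => by rw [abs_pow]; exact pow_le_one₀ (abs_nonneg _) hξ.le) fun y hy => ?_
  have h1 : HasSum (fun j => qP (y / h) j * ξ ^ j) (Real.exp (-(y / h)) * Real.exp (y / h * ξ)) := by
    refine ((hasSum_exp_real (y / h * ξ)).mul_left (Real.exp (-(y / h)))).congr_fun fun j => ?_
    unfold qP; rw [mul_pow]; ring
  have h2 := hasSum_pP (a := fun j => ξ ^ j) h1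
  convert h2 using 1
  rw [← Real.exp_add]
  have : -((1 - ξ) / h * y) = -(y / h) + y / h * ξ := by ring
  rw [this]; simp; ring

lemma lip_bound {g g' : ℝ → ℝ} {C : ℝ} (hg : ∀ x, HasDerivAt g (g' x) x)
    (hC : ∀ x, |g' x| ≤ C) (a b : ℝ) : |g b - g a| ≤ C * |b - a| :=
  convex_univ.norm_image_sub_le_of_norm_hasDerivWithin_le
    (fun x _ => (hg x).hasDerivWithinAt) (fun x _ => hC x) (mem_univ a) (mem_univ b)

lemma taylor_bound {g g' g'' : ℝ → ℝ} {C : ℝ} (hg : ∀ x, HasDerivAt g (g' x) x)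
    (hg' : ∀ x, HasDerivAt g' (g'' x) x)
    (hC : ∀ x, |g'' x| ≤ C) (a b : ℝ) : |g b - g a - g' a * (b - a)| ≤ C * (b - a) ^ 2 := by
  have hC0 : 0 ≤ C := (abs_nonneg _).trans (hC 0)
  have := (convex_uIcc a b).norm_image_sub_le_of_norm_hasDerivWithin_le
    (f := fun x => g x - g' a * x) (f' := fun x => g' x - g' a) (C := C * |b - a|)
    (fun x _ => by
      have := ((hg x).sub ((hasDerivAt_id x).const_mul (g' a))).hasDerivWithinAt (s := uIcc a b)
      rw [mul_one] at this
      exact this)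
    (fun x hx => (lip_bound hg' hC a x).trans
      (mul_le_mul_of_nonneg_left (Set.abs_sub_left_of_mem_uIcc hx) hC0))
    left_mem_uIcc right_mem_uIcc
  rw [Real.norm_eq_abs, Real.norm_eq_abs, mul_assoc, abs_mul_abs_self] at this
  convert this using 1
  · congr 1; ring
  · ring

/-- Pointwise bounds for the Poissonized second difference. -/
lemma P_bounds {g g' g'' : ℝ → ℝ} {C : ℝ} (hg : ∀ x, HasDerivAt g (g' x) x)
    (hg' : ∀ x, HasDerivAt g' (g'' x) x)
    (hC1 : ∀ x, |g' x| ≤ C) (hC2 : ∀ x, |g'' x| ≤ C) {h y : ℝ} (hh : 0 < h) (hy : 0 < y) (x : ℝ)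
    {P : ℝ} {S : ℝ} (hS : HasSum (fun j : ℕ => qP (y / h) j * g (x + ((j : ℝ) - 1) * h)) S)
    (hP : P = S - g (x - h) + y / h * (g (x - h) - g x)) :
    |P| ≤ 3 * C * min (y ^ 2) y ∧
    |P - (g (x + y) - g x - y * g' x)| ≤ C * (2 * h + h ^ 2 + 2 * h * y) := by
  have hC0 : 0 ≤ C := (abs_nonneg _).trans (hC1 0)
  have hl : 0 ≤ y / h := by positivity
  have hf : HasSum (fun j : ℕ => qP (y / h) j *
      (g (x + ((j : ℝ) - 1) * h) - g (x - h) - j * (g x - g (x - h)))) P := by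
    have := (hS.sub ((hasSum_qP (y / h)).mul_right (g (x - h)))).sub
      ((hasSum_qP1 (y / h)).mul_right (g x - g (x - h)))
    rw [show P = S - 1 * g (x - h) - y / h * (g x - g (x - h)) by rw [hP]; ring]
    refine this.congr_fun fun j => ?_
    ring
  refine ⟨?_, ?_⟩
  · have b2 : |P| ≤ 3 * C * y ^ 2 := by
      have e : (y / h) ^ 2 * (3 * C * h ^ 2) = 3 * C * y ^ 2 := by field_simp
      rw [← e]
      refine abs_hasSum_le hf ((hasSum_qP2 (y / h)).mul_right (3 * C * h ^ 2)) fun j => ?_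
      rw [abs_mul, abs_of_nonneg (qP_nonneg hl j), mul_assoc]
      refine mul_le_mul_of_nonneg_left ?_ (qP_nonneg hl j)
      match j with
      | 0 => simp [sub_eq_add_neg]
      | 1 => simp
      | n + 2 =>
        have t1 := taylor_bound hg hg' hC2 (x - h) (x + (((n + 2 : ℕ) : ℝ) - 1) * h)
        have t2 := taylor_bound hg hg' hC2 (x - h) x
        have hn : (0 : ℝ) ≤ n := Nat.cast_nonneg n
        push_cast at t1 ⊢
        rw [abs_le] at t1 t2 ⊢
        have e1 : (x + ((n : ℝ) + 2 - 1) * h - (x - h)) = (n + 2) * h := by ring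
        have e2 : x - (x - h) = h := by ring
        rw [e1] at t1
        rw [e2] at t2
        have k : 0 ≤ C * h ^ 2 := by positivity
        have k1 : 0 ≤ C * h ^ 2 * n := by positivity
        have k2 : 0 ≤ C * h ^ 2 * n ^ 2 := by positivity
        have m1 := mul_le_mul_of_nonneg_left t2.1 (by linarith : (0:ℝ) ≤ n + 2)
        have m2 := mul_le_mul_of_nonneg_left t2.2 (by linarith : (0:ℝ) ≤ n + 2)
        constructor
        · nlinarith [t1.1]
        · nlinarith [t1.2]
    have b1 : |P| ≤ 3 * C * y := by
      have e : (y / h) * (2 * C * h) = 2 * C * y := by field_simp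
      have : |P| ≤ 2 * C * y := by
        rw [← e]
        refine abs_hasSum_le hf ((hasSum_qP1 (y / h)).mul_right (2 * C * h)) fun j => ?_
        rw [abs_mul, abs_of_nonneg (qP_nonneg hl j), mul_assoc]
        refine mul_le_mul_of_nonneg_left ?_ (qP_nonneg hl j)
        have t1 := lip_bound hg hC1 (x - h) (x + ((j : ℝ) - 1) * h)
        have t2 := lip_bound hg hC1 (x - h) x
        have hn : (0 : ℝ) ≤ j := Nat.cast_nonneg j
        have e1 : (x + ((j : ℝ) - 1) * h - (x - h)) = j * h := by ring
        have e2 : x - (x - h) = h := by ring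
        rw [e1, abs_of_nonneg (mul_nonneg hn hh.le)] at t1
        rw [e2, abs_of_pos hh] at t2
        calc _ ≤ _ := abs_sub _ _
          _ ≤ C * (j * h) + j * (C * h) := by
            rw [abs_mul, abs_of_nonneg hn]
            gcongr
          _ = _ := by ring
      nlinarith [mul_nonneg hC0 hy.le]
    rcases min_cases (y ^ 2) y with ⟨e, _⟩ | ⟨e, _⟩ <;> rw [e] <;> assumption
  · -- the convergence estimate
    have q0 := hasSum_qP (y / h)
    have q1 := hasSum_qP1 (y / h)
    have q2 := hasSum_qP2 (y / h)
    have hR : HasSum (fun j : ℕ => qP (y / h) j * (g (x + ((j : ℝ) - 1) * h) - g (x + y)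
        - g' (x + y) * (x + ((j : ℝ) - 1) * h - (x + y)))) (S - g (x + y) + g' (x + y) * h) := by
      have := (hS.sub (q0.mul_right (g (x + y) - g' (x + y) * (h + y)))).sub
        (q1.mul_right (g' (x + y) * h))
      have e : S - g (x + y) + g' (x + y) * h = S - 1 * (g (x + y) - g' (x + y) * (h + y))
          - y / h * (g' (x + y) * h) := by
        field_simp; ring
      rw [e]
      refine this.congr_fun fun j => ?_
      ring
    have hB : HasSum (fun j : ℕ => qP (y / h) j * (C * (x + ((j : ℝ) - 1) * h - (x + y)) ^ 2))
        (C * (h * y + h ^ 2)) := by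
      have := ((q2.mul_right (C * h ^ 2)).add (q1.mul_right (C * (h ^ 2 - 2 * h * (h + y))))).add
        (q0.mul_right (C * (h + y) ^ 2))
      have e : C * (h * y + h ^ 2) = (y / h) ^ 2 * (C * h ^ 2)
          + y / h * (C * (h ^ 2 - 2 * h * (h + y))) + 1 * (C * (h + y) ^ 2) := by
        field_simp; ring
      rw [e]
      refine this.congr_fun fun j => ?_
      ring
    have r1 : |S - g (x + y) + g' (x + y) * h| ≤ C * (h * y + h ^ 2) := by
      refine abs_hasSum_le hR hB fun j => ?_
      rw [abs_mul, abs_of_nonneg (qP_nonneg hl j)]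
      exact mul_le_mul_of_nonneg_left (taylor_bound hg hg' hC2 _ _) (qP_nonneg hl j)
    have r2 : |g' (x + y) * h| ≤ C * h := by
      rw [abs_mul, abs_of_pos hh]
      exact mul_le_mul_of_nonneg_right (hC1 _) hh.le
    have r3 := lip_bound hg hC1 (x - h) x
    have r4 := taylor_bound hg hg' hC2 x (x - h)
    have e2 : x - (x - h) = h := by ring
    have e3 : x - h - x = -h := by ring
    rw [e2, abs_of_pos hh] at r3
    rw [e3] at r4
    have r5 : |y / h * (g (x - h) - g x - g' x * -h)| ≤ C * (h * y) := by
      rw [abs_mul, abs_of_nonneg hl]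
      calc _ ≤ y / h * (C * (-h) ^ 2) := mul_le_mul_of_nonneg_left r4 hl
        _ = _ := by field_simp
    have e5 : y / h * (g (x - h) - g x - g' x * -h) = y / h * (g (x - h) - g x) + y * g' x := by
      field_simp; ring
    rw [e5] at r5
    rw [hP]
    rw [abs_le] at *
    constructor
    · linarith [r1.1, r2.2, r3.1, r5.1]
    · linarith [r1.2, r2.1, r3.2, r5.2]

lemma T_bound {g g' g'' : ℝ → ℝ} {C : ℝ} (hg : ∀ x, HasDerivAt g (g' x) x)
    (hg' : ∀ x, HasDerivAt g' (g'' x) x)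
    (hC1 : ∀ x, |g' x| ≤ C) (hC2 : ∀ x, |g'' x| ≤ C) {y : ℝ} (hy : 0 < y) (x : ℝ) :
    |g (x + y) - g x - y * g' x| ≤ 2 * C * min (y ^ 2) y := by
  have hC0 : 0 ≤ C := (abs_nonneg _).trans (hC1 0)
  have t1 := taylor_bound hg hg' hC2 x (x + y)
  have t2 := lip_bound hg hC1 x (x + y)
  rw [add_sub_cancel_left] at t1 t2
  rw [abs_of_pos hy] at t2
  have t3 : |y * g' x| ≤ y * C := by
    rw [abs_mul, abs_of_pos hy]; exact mul_le_mul_of_nonneg_left (hC1 x) hy.le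
  have k : 0 ≤ C * y ^ 2 := by positivity
  rw [abs_le] at *
  rcases min_cases (y ^ 2) y with ⟨e, _⟩ | ⟨e, _⟩ <;> rw [e] <;> constructor <;>
    linarith [t1.1, t1.2, t2.1, t2.2, t3.1, t3.2]

/-- Uniform estimate. -/
lemma main_est {μ : Measure ℝ} (h0 : H0 μ) {g g' g'' : ℝ → ℝ} {C : ℝ}
    (hg : ∀ x, HasDerivAt g (g' x) x)
    (hg' : ∀ x, HasDerivAt g' (g'' x) x) (hC : ∀ x, |g x| ≤ C)
    (hC1 : ∀ x, |g' x| ≤ C) (hC2 : ∀ x, |g'' x| ≤ C) {h : ℝ} (hh : 0 < h) {c : ℕ → ℝ}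
    (hc : ∀ ξ : ℝ, |ξ| < 1 → HasSum (fun j : ℕ => c j * ξ ^ j) (psiH μ ((1 - ξ) / h))) (x : ℝ) :
    |(∑' j : ℕ, c j * g (x + ((j : ℝ) - 1) * h)) - ∫ y, (g (x + y) - g x - y * g' x) ∂μ| ≤
      ∫ y, min (C * (2 * h + h ^ 2 + 2 * h * y)) (5 * C * min (y ^ 2) y) ∂μ := by
  have gc : Continuous g := continuous_iff_continuousAt.2 fun x => (hg x).continuousAt
  set S : ℝ → ℝ := fun y => ∑' j : ℕ, qP (y / h) j * g (x + ((j : ℝ) - 1) * h) with hSd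
  set P : ℝ → ℝ := fun y => S y - g (x - h) + y / h * (g (x - h) - g x) with hPd
  have hS : ∀ y, 0 < y → HasSum (fun j : ℕ => qP (y / h) j * g (x + ((j : ℝ) - 1) * h)) (S y) :=
    fun y hy => (summable_qP_bdd (by positivity) (fun j => hC _)).hasSum
  have hPb := fun y hy => P_bounds hg hg' hC1 hC2 hh hy x (hS y hy) (P := P y) rfl
  have key := hasSum_integral_pP h0 hh (a := fun j : ℕ => g (x + ((j : ℝ) - 1) * h))
    (fun j => hC _) (F := P) (fun y hy => by
      have := hasSum_pP (hS y hy)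
      convert this using 1
      simp [hPd, sub_eq_add_neg])
  rw [G_eq h0 hh hc, key.tsum_eq]
  have mi := min_integrable h0
  have Sm : Measurable S := by
    refine Measurable.tsum fun j => ?_
    unfold qP; fun_prop
  have Pm : AEStronglyMeasurable P μ := by
    have : Measurable P := by fun_prop
    exact this.aestronglyMeasurable
  have Pi : Integrable P μ := by
    refine Integrable.mono' (mi.const_mul (3 * C)) Pm ?_
    filter_upwards [ae_pos h0] with y hy using (hPb y hy).1
  have Ti : Integrable (fun y => g (x + y) - g x - y * g' x) μ := by
    refine Integrable.mono' (mi.const_mul (2 * C)) (by fun_prop) ?_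
    filter_upwards [ae_pos h0] with y hy using T_bound hg hg' hC1 hC2 hy x
  have hC0 : 0 ≤ C := (abs_nonneg _).trans (hC1 0)
  rw [← integral_sub Pi Ti]
  refine MeasureTheory.norm_integral_le_of_norm_le (G := ℝ) ?_ ?_
  · refine Integrable.mono' (mi.const_mul (5 * C)) (by fun_prop) ?_
    filter_upwards [ae_pos h0] with y hy
    rw [Real.norm_of_nonneg (by positivity)]
    exact min_le_right _ _
  · filter_upwards [ae_pos h0] with y hy
    refine le_min (hPb y hy).2 ?_
    calc _ ≤ |P y| + |g (x + y) - g x - y * g' x| := abs_sub _ _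
      _ ≤ 3 * C * min (y ^ 2) y + 2 * C * min (y ^ 2) y :=
        add_le_add (hPb y hy).1 (T_bound hg hg' hC1 hC2 hy x)
      _ = _ := by ring

/-- part of the proof of Proposition 4.9 / `prop:gruntolevy`. Under
(H0), let `G h j` (for `h > 0`, `j ∈ ℕ`) be the Grünwald coefficients determined by
`ψ((1−ξ)/h) = Σ_{j≥0} G_{j,h} ξ^j` for `|ξ| < 1`. Then for every `g ∈ C_c^∞(ℝ)` the
Grünwald approximation `∂^ψ_{−h} g(x) = Σ_{j≥0} G_{j,h} g(x+(j−1)h)` converges to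
`D^ψ_{−,∞} g(x) = ∫ (g(x+y) − g(x) − y g'(x)) μ(dy)` uniformly in `x` as `h ↓ 0`. -/
theorem grunwald_converges_uniformly (μ : Measure ℝ) (h0 : H0 μ)
    (G : ℝ → ℕ → ℝ)
    (hG : ∀ h : ℝ, 0 < h → ∀ ξ : ℝ, |ξ| < 1 →
      HasSum (fun j : ℕ => G h j * ξ ^ j) (psiH μ ((1 - ξ) / h)))
    (g : ℝ → ℝ) (hg : ContDiff ℝ (⊤ : ℕ∞) g) (hgsupp : HasCompactSupport g) :
    Tendsto (fun h : ℝ =>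
        ⨆ x : ℝ, |(∑' j : ℕ, G h j * g (x + ((j : ℝ) - 1) * h)) -
          ∫ y, (g (x + y) - g x - y * deriv g x) ∂μ|)
      (𝓝[>] 0) (𝓝 0) := by

  have hgd : ∀ x, HasDerivAt g (deriv g x) x := fun x =>
    (hg.differentiable (by simp) x).hasDerivAt
  have hg1 : ContDiff ℝ (⊤ : ℕ∞) (deriv g) := by
    have := hg.iterate_deriv 1
    simpa using this
  have hg1d : ∀ x, HasDerivAt (deriv g) (deriv (deriv g) x) x := fun x =>
    (hg1.differentiable (by simp) x).hasDerivAt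
  have hg2 : ContDiff ℝ (⊤ : ℕ∞) (deriv (deriv g)) := by
    have := hg1.iterate_deriv 1
    simpa using this
  obtain ⟨C0, hC0⟩ := hgsupp.exists_bound_of_continuous hg.continuous
  obtain ⟨C1, hC1⟩ := hgsupp.deriv.exists_bound_of_continuous hg1.continuous
  obtain ⟨C2, hC2⟩ := hgsupp.deriv.deriv.exists_bound_of_continuous hg2.continuous
  obtain ⟨C, hC, hC', hC''⟩ : ∃ C, C0 ≤ C ∧ C1 ≤ C ∧ C2 ≤ C :=
    ⟨max C0 (max C1 C2), by simp, by simp, by simp⟩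
  have hCn : 0 ≤ C := (norm_nonneg _).trans ((hC0 0).trans hC)
  have lim : Tendsto (fun h : ℝ =>
      ∫ y, min (C * (2 * h + h ^ 2 + 2 * h * y)) (5 * C * min (y ^ 2) y) ∂μ)
      (𝓝[>] 0) (𝓝 (∫ y, (0 : ℝ) ∂μ)) := by
    refine tendsto_integral_filter_of_dominated_convergence (fun y => 5 * C * min (y ^ 2) y)
      (.of_forall fun h => by fun_prop) ?_ ((min_integrable h0).const_mul _) ?_
    · filter_upwards [self_mem_nhdsWithin] with h hh
      filter_upwards [ae_pos h0] with y hy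
      have hh' : 0 < h := hh
      rw [Real.norm_of_nonneg (by positivity)]
      exact min_le_right _ _
    · filter_upwards [ae_pos h0] with y hy
      have hc : Continuous (fun h : ℝ =>
        min (C * (2 * h + h ^ 2 + 2 * h * y)) (5 * C * min (y ^ 2) y)) := by fun_prop
      have := (hc.tendsto 0).mono_left (nhdsWithin_le_nhds (s := Ioi 0))
      have e : min (C * (2 * 0 + 0 ^ 2 + 2 * 0 * y)) (5 * C * min (y ^ 2) y) = 0 := by
        have : 0 ≤ 5 * C * min (y ^ 2) y := by positivity
        simpa using this
      rwa [e] at this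
  rw [integral_zero] at lim
  refine tendsto_of_tendsto_of_tendsto_of_le_of_le' tendsto_const_nhds lim
    (.of_forall fun h => Real.iSup_nonneg fun x => abs_nonneg _) ?_
  filter_upwards [self_mem_nhdsWithin] with h hh
  exact ciSup_le fun x => main_est h0 hgd hg1d (fun x => (hC0 x).trans hC)
    (fun x => (hC1 x).trans hC') (fun x => (hC2 x).trans hC'') hh (hG h hh) x
end
end
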